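/- arXiv:2109.08362 — 9 statements merged into one kernel-verified Lean document; each statement's English description precedes it below -/
import Mathlib

section
/- Let t ∈ (0, max f). Any point x₀ lying in the intersection of the closures of two distinct connected components of the interior U_t° of the upper level set U_t is a critical point of f, i.e., ∇f(x₀) = 0. -/
open Metric Set Filter Topology MeasureTheory

lemma exists_common_point {d : ℕ} (f : EuclideanSpace ℝ (Fin d) → ℝ)
    (hf : ContDiff ℝ 2 f) (t : ℝ) (x₀ : EuclideanSpace ℝ (Fin d)) (h0 : t ≤ f x₀)
    (hg : gradient f x₀ ≠ 0) :
    ∃ p, ∃ ε > 0, ∀ x ∈ ball x₀ ε, x ∈ interior {x | t ≤ f x} →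
      p ∈ connectedComponentIn (interior {x | t ≤ f x}) x := by
  set g := gradient f x₀ with hgdef
  have hgpos : 0 < ‖g‖ := norm_pos_iff.mpr hg
  have hstrict : HasStrictFDerivAt f (fderiv ℝ f x₀) x₀ :=
    hf.contDiffAt.hasStrictFDerivAt (by norm_num)
  have hfg : fderiv ℝ f x₀ g = ‖g‖ ^ 2 := by
    rw [← real_inner_self_eq_norm_sq]
    exact (InnerProductSpace.toDual_symm_apply (𝕜 := ℝ) (x := g) (y := fderiv ℝ f x₀)).symm
  have hev := hstrict.isLittleO.def (half_pos hgpos)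
  obtain ⟨r, hr, hball⟩ := Metric.eventually_nhds_iff_ball.mp hev
  have hinc : ∀ x ∈ ball x₀ r, ∀ s : ℝ, 0 < s → x + s • g ∈ ball x₀ r →
      f x < f (x + s • g) := by
    intro x hx s hs hxs
    have h := hball (x + s • g, x) (by
      rw [mem_ball, Prod.dist_eq]; exact max_lt hxs hx)
    simp only [add_sub_cancel_left, map_smul, hfg, norm_smul, Real.norm_eq_abs, abs_of_pos hs,
      smul_eq_mul] at h
    have h2 := (abs_le.mp h).1
    have h3 : 0 < s * ‖g‖ ^ 2 := by positivity
    nlinarith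
  set σ := r / (4 * ‖g‖) with hσ
  have hσpos : 0 < σ := by positivity
  have hσg : σ * ‖g‖ = r / 4 := by rw [hσ]; field_simp
  have hmem : ∀ x ∈ ball x₀ (r / 2), ∀ s : ℝ, 0 ≤ s → s ≤ σ → x + s • g ∈ ball x₀ r := by
    intro x hx s hs hsσ
    rw [mem_ball, dist_eq_norm] at hx ⊢
    have h1 : ‖s • g‖ ≤ r / 4 := by
      rw [norm_smul, Real.norm_eq_abs, abs_of_nonneg hs, ← hσg]
      gcongr
    calc ‖x + s • g - x₀‖ = ‖(x - x₀) + s • g‖ := by congr 1; abel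
      _ ≤ ‖x - x₀‖ + ‖s • g‖ := norm_add_le _ _
      _ < r := by linarith
  have hopen : IsOpen {x | t < f x} := isOpen_lt continuous_const hf.continuous
  have hsub : {x | t < f x} ⊆ interior {x | t ≤ f x} :=
    interior_maximal (fun x (hx : t < f x) => show t ≤ f x from hx.le) hopen
  have hp : x₀ + σ • g ∈ {x | t < f x} :=
    lt_of_le_of_lt h0 (hinc x₀ (mem_ball_self hr) σ hσpos
      (hmem x₀ (mem_ball_self (half_pos hr)) σ hσpos.le le_rfl))
  obtain ⟨ε, hε, hεb⟩ := Metric.isOpen_iff.mp hopen _ hp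
  refine ⟨x₀ + σ • g, min ε (r / 2), lt_min hε (half_pos hr), fun x hx hxU => ?_⟩
  have hx1 : x ∈ ball x₀ ε := ball_subset_ball (min_le_left _ _) hx
  have hx2 : x ∈ ball x₀ (r / 2) := ball_subset_ball (min_le_right _ _) hx
  have hxr : x ∈ ball x₀ r := ball_subset_ball (by linarith) hx2
  let S : Set (EuclideanSpace ℝ (Fin d)) := (fun s : ℝ => x + s • g) '' Icc 0 σ
  have hS : IsPreconnected S :=
    isPreconnected_Icc.image _ (by fun_prop)
  have hB : IsPreconnected (ball (x₀ + σ • g) ε) := (convex_ball _ _).isPreconnected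
  have hxS : x ∈ S := ⟨0, ⟨le_rfl, hσpos.le⟩, by simp⟩
  have hqS : x + σ • g ∈ S := ⟨σ, ⟨hσpos.le, le_rfl⟩, rfl⟩
  have hqB : x + σ • g ∈ ball (x₀ + σ • g) ε := by
    rw [mem_ball, dist_add_right]; exact hx1
  have hSB := IsPreconnected.union (x + σ • g) hqS hqB hS hB
  refine hSB.subset_connectedComponentIn (Or.inl hxS) ?_ (Or.inr (mem_ball_self hε))
  rintro z (⟨s, ⟨hs0, hs1⟩, rfl⟩ | hz)
  · rcases hs0.eq_or_lt with rfl | hs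
    · simpa using hxU
    · apply hsub
      have hxt : x ∈ {x | t ≤ f x} := interior_subset hxU
      exact lt_of_le_of_lt (show t ≤ f x from hxt) (hinc x hxr s hs (hmem x hx2 s hs0 hs1))
  · exact hsub (hεb hz)

/-- Any point in the intersection of the closures of two distinct connected
components of the interior of the upper level set `U_t = {x | f x ≥ t}` is a critical
point of `f`. -/
theorem split_points_are_critical {d : ℕ} (f : EuclideanSpace ℝ (Fin d) → ℝ)
    (hf : ContDiff ℝ 2 f) (hf_nonneg : ∀ x, 0 ≤ f x) (hf_int : ∫ x, f x = 1)
    (t : ℝ) (ht : 0 < t) (ht_max : ∃ z, t < f z)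
    (C₁ C₂ : Set (EuclideanSpace ℝ (Fin d)))
    (hC₁ : ∃ y ∈ interior {x | t ≤ f x},
      C₁ = connectedComponentIn (interior {x | t ≤ f x}) y)
    (hC₂ : ∃ y ∈ interior {x | t ≤ f x},
      C₂ = connectedComponentIn (interior {x | t ≤ f x}) y)
    (hne : C₁ ≠ C₂)
    (x₀ : EuclideanSpace ℝ (Fin d))
    (hx₀ : x₀ ∈ closure C₁ ∩ closure C₂) :
    gradient f x₀ = 0 := by
  by_contra hg
  obtain ⟨y₁, hy₁, rfl⟩ := hC₁
  obtain ⟨y₂, hy₂, rfl⟩ := hC₂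
  have hcl : IsClosed {x | t ≤ f x} := isClosed_le continuous_const hf.continuous
  have h0 : t ≤ f x₀ :=
    closure_minimal ((connectedComponentIn_subset _ _).trans interior_subset) hcl hx₀.1
  obtain ⟨p, ε, hε, hp⟩ := exists_common_point f hf t x₀ h0 hg
  have key : ∀ y, x₀ ∈ closure (connectedComponentIn (interior {x | t ≤ f x}) y) →
      connectedComponentIn (interior {x | t ≤ f x}) y =
        connectedComponentIn (interior {x | t ≤ f x}) p := by
    intro y hy
    obtain ⟨x, hx, hd⟩ := Metric.mem_closure_iff.mp hy ε hε
    rw [connectedComponentIn_eq hx]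
    exact connectedComponentIn_eq
      (hp x (by rwa [mem_ball, dist_comm]) (connectedComponentIn_subset _ _ hx))
  exact hne ((key y₁ hx₀.1).trans (key y₂ hx₀.2).symm)
end

section
/- Suppose t ∈ (0, max f), the level set L_t is nonempty and compact, and there are no critical points of f on L_t (i.e., ∇f(x) ≠ 0 for all x ∈ L_t). Then for all sufficiently small η > 0, the metric projection P_{t,η} onto L_{t+η} is well-defined on L_t and its restriction to L_t is a homeomorphism from L_t onto L_{t+η}. -/
open Metric Set Filter Topology MeasureTheory

lemma superlevel_bounded {d : ℕ} (f : EuclideanSpace ℝ (Fin d) → ℝ)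
    (hf : Continuous f) (hf_int : ∫ x, f x = 1)
    (t : ℝ) (ht : 0 < t)
    (hcomp : IsCompact {x : EuclideanSpace ℝ (Fin d) | f x = t}) :
    ∃ R > 0, ∀ x, t ≤ f x → ‖x‖ ≤ R := by
  obtain ⟨R, hRpos, hR⟩ := hcomp.isBounded.exists_pos_norm_le
  refine ⟨R, hRpos, fun p hp => ?_⟩
  by_contra! hlt
  have hint : Integrable f := by
    by_contra h
    rw [integral_undef h] at hf_int
    norm_num at hf_int
  have hp0 : 0 < ‖p‖ := hRpos.trans hlt
  set v : EuclideanSpace ℝ (Fin d) := (‖p‖)⁻¹ • p with hv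
  have hvn : ‖v‖ = 1 := by
    rw [hv, norm_smul, norm_inv, norm_norm, inv_mul_cancel₀ hp0.ne']
  have hvv : inner ℝ v v = 1 := by rw [real_inner_self_eq_norm_sq, hvn]; norm_num
  have hvp : inner ℝ v p = ‖p‖ := by
    rw [hv, real_inner_smul_left, real_inner_self_eq_norm_sq]; field_simp
  let H : ℝ → Set (EuclideanSpace ℝ (Fin d)) := fun c => {x | c < inner ℝ v x}
  have hHo : ∀ c, IsOpen (H c) := fun c => isOpen_lt continuous_const (by fun_prop)
  have hHc : Convex ℝ (H R) := by
    intro x hx y hy a b ha hb hab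
    simp only [H, mem_ofPred_eq, inner_add_right, real_inner_smul_right] at hx hy ⊢
    rcases ha.eq_or_lt with rfl | ha
    · have : b = 1 := by linarith
      subst this; linarith
    · nlinarith
  have hne : ∀ x ∈ H R, f x ≠ t := by
    intro x hx hxt
    have h1 := hR x hxt
    have h2 := real_inner_le_norm v x
    simp only [H, mem_ofPred_eq] at hx
    rw [hvn] at h2
    linarith
  have hpH : p ∈ H R := by simp only [H, mem_ofPred_eq, hvp]; exact hlt
  have hsub : H R ⊆ {x | t ≤ ‖f x‖} := by
    intro x hx
    have : t < f x := by
      by_contra! hxt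
      obtain ⟨z, hz, hzt⟩ := hHc.isPreconnected.intermediate_value hx hpH hf.continuousOn ⟨hxt, hp⟩
      exact hne z hz hzt
    exact this.le.trans (le_abs_self _)
  have hfin : volume (H R) ≠ ⊤ :=
    ((measure_mono hsub).trans_lt (hint.measure_norm_ge_lt_top ht)).ne
  have htr : volume (H (R+1)) = volume (H R) := by
    rw [← measure_preimage_add_right volume v (H (R+1))]
    congr 1
    ext x
    simp only [H, mem_preimage, mem_ofPred_eq, inner_add_right, hvv]
    constructor <;> intro h <;> linarith
  have hss : H (R+1) ⊆ H R := fun x hx => by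
    simp only [H, mem_ofPred_eq] at hx ⊢; linarith
  have hd : volume (H R \ H (R+1)) = 0 := by
    rw [measure_sdiff hss (hHo _).measurableSet.nullMeasurableSet (htr ▸ hfin), htr, tsub_self]
  have ho : IsOpen (H R ∩ {x | inner ℝ v x < R + 1}) :=
    (hHo R).inter (isOpen_lt (by fun_prop) continuous_const)
  have hpos := ho.measure_pos volume ⟨(R + 1/2) • v, by
    simp only [H, mem_inter_iff, mem_ofPred_eq, real_inner_smul_right, hvv]
    constructor <;> linarith⟩
  refine hpos.ne' (measure_mono_null ?_ hd)
  rintro x ⟨h1, h2⟩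
  refine ⟨h1, ?_⟩
  simp only [H, mem_ofPred_eq] at h2 ⊢
  linarith

lemma taylor_bounds {E : Type*} [NormedAddCommGroup E] [InnerProductSpace ℝ E]
    [FiniteDimensional ℝ E] (f : E → ℝ) (hf : ContDiff ℝ 2 f) (R : ℝ) :
    ∃ M > 0, ∀ x y : E, ‖x‖ ≤ R → ‖y‖ ≤ R →
      |f y - f x - inner ℝ (gradient f x) (y - x)| ≤ M * ‖y - x‖ ^ 2 ∧
      ‖gradient f y - gradient f x‖ ≤ M * ‖y - x‖ := by
  have hf1 : ContDiff ℝ 1 (fderiv ℝ f) := hf.fderiv_right (by norm_num)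
  have hf2 : Continuous (fderiv ℝ (fderiv ℝ f)) := hf1.continuous_fderiv (by norm_num)
  obtain ⟨C, hC⟩ := (isCompact_closedBall (0 : E) R).exists_bound_of_continuousOn
    (f := fderiv ℝ (fderiv ℝ f)) hf2.continuousOn
  have hlip : ∀ x y : E, ‖x‖ ≤ R → ‖y‖ ≤ R →
      ‖fderiv ℝ f y - fderiv ℝ f x‖ ≤ (max C 1) * ‖y - x‖ := by
    intro x y hx hy
    exact (convex_closedBall (0 : E) R).norm_image_sub_le_of_norm_fderiv_le
      (fun z _ => (hf1.differentiable (by norm_num)) z)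
      (fun z hz => (hC z hz).trans (le_max_left _ _)) (by simpa using hx) (by simpa using hy)
  refine ⟨max C 1, by positivity, fun x y hx hy => ⟨?_, ?_⟩⟩
  · rw [inner_gradient_left, ← Real.norm_eq_abs]
    have hseg : segment ℝ x y ⊆ closedBall (0 : E) R :=
      (convex_closedBall (0 : E) R).segment_subset (by simpa using hx) (by simpa using hy)
    have := (convex_segment (𝕜 := ℝ) x y).norm_image_sub_le_of_norm_fderiv_le'
      (f := f) (φ := fderiv ℝ f x) (C := max C 1 * ‖y - x‖)
      (fun z _ => (hf.differentiable (by norm_num)) z)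
      (fun z hz => by
        have h1 := hlip x z hx (by simpa using hseg hz)
        have h2 : ‖z - x‖ ≤ ‖y - x‖ := by
          obtain ⟨a, b, ha, hb, hab, rfl⟩ := hz
          have : a • x + b • y - x = b • (y - x) := by
            rw [← eq_sub_iff_add_eq] at hab; subst hab; module
          rw [this, norm_smul, Real.norm_of_nonneg hb]
          exact mul_le_of_le_one_left (norm_nonneg _) (by linarith)
        exact h1.trans (by gcongr))
      (left_mem_segment ℝ x y) (right_mem_segment ℝ x y)
    calc _ ≤ _ := this
      _ = _ := by ring
  · have h := hlip x y hx hy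
    rw [← toDual_gradient, ← toDual_gradient, ← map_sub, LinearIsometryEquiv.norm_map] at h
    exact h

lemma gradient_lower {E : Type*} [NormedAddCommGroup E] [InnerProductSpace ℝ E]
    [FiniteDimensional ℝ E] (f : E → ℝ) (hf : ContDiff ℝ 2 f) (t R : ℝ)
    (hR : ∀ x, t ≤ f x → ‖x‖ ≤ R) (hreg : ∀ x, f x = t → gradient f x ≠ 0) :
    ∃ m > 0, ∃ η₁ > 0, ∀ x, t ≤ f x → f x < t + η₁ → m ≤ ‖gradient f x‖ := by
  have hg : Continuous fun x => ‖gradient f x‖ := by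
    have : (fun x => ‖gradient f x‖) = fun x => ‖fderiv ℝ f x‖ := by
      ext x; rw [← toDual_gradient, LinearIsometryEquiv.norm_map]
    rw [this]
    exact (hf.continuous_fderiv (by norm_num)).norm
  have hfc := hf.continuous
  have hU : IsCompact {x | t ≤ f x} := by
    refine Metric.isCompact_of_isClosed_isBounded (isClosed_le continuous_const hfc) ?_
    exact (Metric.isBounded_closedBall (x := (0:E)) (r := R)).subset
      (fun x hx => by simpa using hR x hx)
  have hL : IsCompact {x | f x = t} :=
    hU.of_isClosed_subset (isClosed_eq hfc continuous_const) (fun x hx => le_of_eq (Eq.symm hx))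
  obtain ⟨m, hm, hmL⟩ : ∃ m > 0, ∀ x, f x = t → m < ‖gradient f x‖ := by
    rcases {x | f x = t}.eq_empty_or_nonempty with h | h
    · exact ⟨1, one_pos, fun x hx => by
        have : x ∈ {x | f x = t} := hx
        rw [h] at this; exact this.elim⟩
    · obtain ⟨z, hz, hzm⟩ := hL.exists_isMinOn h hg.continuousOn
      have hz0 : 0 < ‖gradient f z‖ := norm_pos_iff.2 (hreg z hz)
      exact ⟨‖gradient f z‖ / 2, by linarith, fun x hx => by
        have : ‖gradient f z‖ ≤ ‖gradient f x‖ := hzm hx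
        linarith⟩
  have hK : IsCompact ({x | t ≤ f x} ∩ {x | ‖gradient f x‖ ≤ m}) :=
    hU.inter_right (isClosed_le hg continuous_const)
  rcases ({x | t ≤ f x} ∩ {x | ‖gradient f x‖ ≤ m}).eq_empty_or_nonempty with h | h
  · refine ⟨m, hm, 1, one_pos, fun x hx _ => ?_⟩
    by_contra! hlt
    have : x ∈ ({x | t ≤ f x} ∩ {x | ‖gradient f x‖ ≤ m}) := ⟨hx, hlt.le⟩
    rw [h] at this; exact this
  · obtain ⟨z, ⟨hz1, hz2⟩, hzm⟩ := hK.exists_isMinOn h hfc.continuousOn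
    have hz1' : t ≤ f z := hz1
    have hz2' : ‖gradient f z‖ ≤ m := hz2
    have hzt : t < f z := by
      refine lt_of_le_of_ne hz1' fun he => ?_
      have := hmL z he.symm
      linarith
    refine ⟨m, hm, f z - t, by linarith, fun x hx hx' => ?_⟩
    by_contra! hlt
    have : f z ≤ f x := hzm ⟨hx, hlt.le⟩
    linarith

lemma lagrange_nearest {E : Type*} [NormedAddCommGroup E] [InnerProductSpace ℝ E]
    [FiniteDimensional ℝ E] (f : E → ℝ) (hf : ContDiff ℝ 2 f) (c : ℝ) (x y : E)
    (hy : f y = c) (hg : gradient f y ≠ 0) (hmin : ∀ z, f z = c → dist x y ≤ dist x z) :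
    x = y + dist x y • (‖gradient f y‖⁻¹ • gradient f y) ∨
    x = y + (-dist x y) • (‖gradient f y‖⁻¹ • gradient f y) := by
  subst hy
  have hext : IsLocalExtrOn (fun z => ‖z - x‖ ^ 2) {z | f z = f y} y := by
    left
    refine IsMinOn.localize ?_
    intro z hz
    have := hmin z hz
    rw [dist_eq_norm', dist_eq_norm'] at this
    change ‖y - x‖ ^ 2 ≤ ‖z - x‖ ^ 2
    gcongr
  have hφ : HasStrictFDerivAt (fun z => ‖z - x‖ ^ 2) (2 • innerSL ℝ (y - x)) y := by
    have h1 := (hasStrictFDerivAt_norm_sq (y - x))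
    have h2 : HasStrictFDerivAt (fun z : E => z - x) (ContinuousLinearMap.id ℝ E) y :=
      (hasStrictFDerivAt_id y).sub_const x
    have := h1.comp y h2
    simpa using this
  obtain ⟨a, b, hab, hsum⟩ := hext.exists_multipliers_of_hasStrictFDerivAt_1d
    (hf.contDiffAt.hasStrictFDerivAt (by norm_num)) hφ
  have key : a • gradient f y + (2 * b) • (y - x) = 0 := by
    refine ext_inner_right ℝ fun v => ?_
    have := congrArg (fun L : E →L[ℝ] ℝ => L v) hsum
    simp only [add_apply, smul_apply, innerSL_apply_apply, ← inner_gradient_left,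
      zero_apply, smul_eq_mul, nsmul_eq_mul] at this
    rw [inner_add_left, real_inner_smul_left, real_inner_smul_left, inner_zero_left]
    push_cast at this
    linarith
  have hgn : 0 < ‖gradient f y‖ := norm_pos_iff.2 hg
  have hb : b ≠ 0 := by
    rintro rfl
    simp only [mul_zero, zero_smul, add_zero, smul_eq_zero, hg, or_false] at key
    exact hab (by rw [key]; rfl)
  have hx : x = y + (a / (2 * b) * ‖gradient f y‖) • (‖gradient f y‖⁻¹ • gradient f y) := by
    rw [smul_smul, mul_assoc, mul_inv_cancel₀ hgn.ne', mul_one]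
    have h2 : (2 * b) ≠ 0 := by positivity
    have : (2 * b) • (x - y) = a • gradient f y := by
      have : (2 * b) • (x - y) = - ((2 * b) • (y - x)) := by module
      rw [this]; exact (eq_neg_of_add_eq_zero_left key).symm
    have h3 : x - y = (a / (2 * b)) • gradient f y := by
      rw [div_eq_inv_mul, mul_smul, ← this, smul_smul, inv_mul_cancel₀ h2, one_smul]
    rw [← h3]; abel
  set k := a / (2 * b) * ‖gradient f y‖
  have hd : dist x y = |k| := by
    rw [dist_eq_norm]
    nth_rewrite 1 [hx]
    rw [add_sub_cancel_left, norm_smul, norm_smul, norm_inv, norm_norm, inv_mul_cancel₀ hgn.ne',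
      mul_one, Real.norm_eq_abs]
  rw [hd]
  rcases abs_choice k with h | h
  · left; rw [h]; exact hx
  · right; rw [h, neg_neg]; exact hx

/-- If `L_t` is nonempty, compact, and free of critical points, then for all
sufficiently small `η > 0` the metric projection onto `L_{t+η}` is well-defined on `L_t`
(each point of `L_t` has a unique nearest point in `L_{t+η}`) and its restriction to `L_t`
is a homeomorphism from `L_t` onto `L_{t+η}`. -/
theorem projection_is_homeomorphism {d : ℕ} (f : EuclideanSpace ℝ (Fin d) → ℝ)
    (hf : ContDiff ℝ 2 f) (hf_nonneg : ∀ x, 0 ≤ f x) (hf_int : ∫ x, f x = 1)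
    (t : ℝ) (ht : 0 < t) (ht_max : ∃ z, t < f z)
    (hne : {x : EuclideanSpace ℝ (Fin d) | f x = t}.Nonempty)
    (hcomp : IsCompact {x : EuclideanSpace ℝ (Fin d) | f x = t})
    (hreg : ∀ x, f x = t → gradient f x ≠ 0) :
    ∃ η₀ > 0, ∀ η : ℝ, 0 < η → η < η₀ →
      (∀ x ∈ {x : EuclideanSpace ℝ (Fin d) | f x = t},
        ∃! y, y ∈ {z : EuclideanSpace ℝ (Fin d) | f z = t + η} ∧
          dist x y = Metric.infDist x {z : EuclideanSpace ℝ (Fin d) | f z = t + η}) ∧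
      ∃ h : {x : EuclideanSpace ℝ (Fin d) | f x = t} ≃ₜ
            {z : EuclideanSpace ℝ (Fin d) | f z = t + η},
        ∀ x : {x : EuclideanSpace ℝ (Fin d) | f x = t},
          dist (x : EuclideanSpace ℝ (Fin d)) (h x : EuclideanSpace ℝ (Fin d)) =
            Metric.infDist (x : EuclideanSpace ℝ (Fin d))
              {z : EuclideanSpace ℝ (Fin d) | f z = t + η} := by
  obtain ⟨R, hRpos, hR⟩ := superlevel_bounded f hf.continuous hf_int t ht hcomp
  obtain ⟨M, hM, hT⟩ := taylor_bounds f hf (R + 1)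
  obtain ⟨m, hm, η₁, hη₁, hg⟩ := gradient_lower f hf t R hR hreg
  set s₀ : ℝ := min (m / (4 * M)) 1 with hs₀
  have hs₀pos : 0 < s₀ := lt_min (by positivity) one_pos
  have hs₀1 : s₀ ≤ 1 := min_le_right _ _
  have hs₀M : M * s₀ ≤ m / 4 := by
    have : s₀ ≤ m / (4 * M) := min_le_left _ _
    rw [le_div_iff₀ (by positivity)] at this
    linarith
  have hfc := hf.continuous
  -- unit normal
  let u : EuclideanSpace ℝ (Fin d) → EuclideanSpace ℝ (Fin d) :=
    fun x => ‖gradient f x‖⁻¹ • gradient f x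
  have hun : ∀ x, m ≤ ‖gradient f x‖ → ‖u x‖ = 1 := by
    intro x hx
    have : 0 < ‖gradient f x‖ := hm.trans_le hx
    simp only [u]
    rw [norm_smul, norm_inv, norm_norm, inv_mul_cancel₀ this.ne']
  have hgu : ∀ x, m ≤ ‖gradient f x‖ → gradient f x = ‖gradient f x‖ • u x := by
    intro x hx
    have : 0 < ‖gradient f x‖ := hm.trans_le hx
    simp only [u]
    rw [smul_smul, mul_inv_cancel₀ this.ne', one_smul]
  have hmn : ∀ x, m ≤ ‖gradient f x‖ → ‖x‖ ≤ R → ∀ s : ℝ, |s| ≤ 1 → ‖x + s • u x‖ ≤ R + 1 := by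
    intro x hx hxR s hs
    calc ‖x + s • u x‖ ≤ ‖x‖ + ‖s • u x‖ := norm_add_le _ _
      _ ≤ R + 1 := by
        rw [norm_smul, hun x hx, mul_one, Real.norm_eq_abs]; linarith
  have hmove : ∀ x, m ≤ ‖gradient f x‖ → ‖x‖ ≤ R → ∀ s : ℝ, |s| ≤ 1 →
      |f (x + s • u x) - f x - s * ‖gradient f x‖| ≤ M * s ^ 2 := by
    intro x hx hxR s hs
    have h := (hT x (x + s • u x) (by linarith) (hmn x hx hxR s hs)).1
    rw [add_sub_cancel_left, norm_smul, hun x hx, mul_one, Real.norm_eq_abs, sq_abs] at h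
    have h2 : inner ℝ (gradient f x) (s • u x) = s * ‖gradient f x‖ := by
      rw [real_inner_smul_right]
      nth_rewrite 1 [hgu x hx]
      rw [real_inner_smul_left, real_inner_self_eq_norm_sq, hun x hx]; ring
    rwa [h2] at h
  -- key lemma: a tangent ball touches the level set only once
  have key : ∀ x y z : EuclideanSpace ℝ (Fin d), ∀ s : ℝ, 0 < s → s ≤ s₀ → m ≤ ‖gradient f y‖ →
      t ≤ f y → f z = f y → x = y + (-s) • u y → dist x z ≤ s → z = y := by
    intro x y z s hs hss hy hty hfz hx hdist
    have hyR := hR y hty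
    have hzR := hR z (hfz ▸ hty)
    have h := (hT y z (by linarith) (by linarith)).1
    rw [hfz, sub_self, zero_sub, abs_neg, hgu y hy, real_inner_smul_left] at h
    rw [dist_eq_norm'] at hdist
    have h1 : z - x = (z - y) + s • u y := by rw [hx]; module
    have h2 : ‖z - x‖ ^ 2 ≤ s ^ 2 := by gcongr
    rw [h1, norm_add_sq_real, norm_smul, hun y hy, real_inner_smul_right, mul_one,
      Real.norm_eq_abs, sq_abs, real_inner_comm] at h2
    have h3 := (abs_le.1 h).1
    set I := inner ℝ (u y) (z - y)
    set G := ‖gradient f y‖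
    have hw : 0 ≤ ‖z - y‖ ^ 2 := by positivity
    have h4 : 2 * s * I ≤ - ‖z - y‖ ^ 2 := by linarith
    have h5 : 2 * s * (G * I) ≤ - (m * ‖z - y‖ ^ 2) := by
      have : G * (2 * s * I) ≤ G * (- ‖z - y‖ ^ 2) :=
        mul_le_mul_of_nonneg_left h4 (norm_nonneg _)
      nlinarith
    have h6 : 2 * s * (-(M * ‖z - y‖ ^ 2)) ≤ 2 * s * (G * I) :=
      mul_le_mul_of_nonneg_left h3 (by linarith)
    have h7 : M * s ≤ m / 4 := (mul_le_mul_of_nonneg_left hss hM.le).trans hs₀M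
    have h8 : m * ‖z - y‖ ^ 2 ≤ 2 * (M * s) * ‖z - y‖ ^ 2 := by linarith
    have h9 : ‖z - y‖ ^ 2 ≤ 0 := by
      have : 2 * (M * s) * ‖z - y‖ ^ 2 ≤ 2 * (m / 4) * ‖z - y‖ ^ 2 := by gcongr
      have : m * ‖z - y‖ ^ 2 ≤ m * 0 := by linarith
      exact le_of_mul_le_mul_left this hm
    have h10 : ‖z - y‖ = 0 := by
      have : ‖z - y‖ ^ 2 = 0 := le_antisymm h9 hw
      exact pow_eq_zero_iff (two_ne_zero) |>.1 this
    exact sub_eq_zero.1 (norm_eq_zero.1 h10)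
  refine ⟨min η₁ (s₀ * m / 2), lt_min hη₁ (by positivity), fun η hη hηlt => ?_⟩
  have hηη₁ : η < η₁ := hηlt.trans_le (min_le_left _ _)
  have hηs : η < s₀ * m / 2 := hηlt.trans_le (min_le_right _ _)
  have hgx : ∀ x, f x = t → m ≤ ‖gradient f x‖ := fun x hx => hg x hx.ge (by linarith)
  have hgy : ∀ y, f y = t + η → m ≤ ‖gradient f y‖ := fun y hy =>
    hg y (by linarith) (by linarith)
  have hMs : M * s₀ ^ 2 ≤ s₀ * m / 4 := by nlinarith
  -- existence of points moving up
  have hup : ∀ x, f x = t → ∃ y, f y = t + η ∧ dist x y ≤ s₀ := by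
    intro x hx
    have hmx := hgx x hx
    have hc : ContinuousOn (fun s : ℝ => f (x + s • u x)) (Icc 0 s₀) := by fun_prop
    have h := (abs_le.1 (hmove x hmx (hR x hx.ge) s₀ (by rwa [abs_of_pos hs₀pos]))).1
    obtain ⟨s, hs, hfs⟩ := intermediate_value_Icc hs₀pos.le hc
      (show t + η ∈ Icc _ _ by
        constructor
        · simp only [zero_smul, add_zero]; linarith
        · have : s₀ * m ≤ s₀ * ‖gradient f x‖ := by gcongr
          nlinarith)
    refine ⟨x + s • u x, hfs, ?_⟩
    rw [dist_eq_norm', add_sub_cancel_left, norm_smul, hun x hmx, mul_one, Real.norm_eq_abs,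
      abs_of_nonneg hs.1]
    exact hs.2
  have hdown : ∀ y, f y = t + η → ∃ s, 0 ≤ s ∧ s ≤ s₀ ∧ f (y + (-s) • u y) = t := by
    intro y hy
    have hmy := hgy y hy
    have hc : ContinuousOn (fun s : ℝ => f (y + (-s) • u y)) (Icc 0 s₀) := by fun_prop
    have h := (abs_le.1 (hmove y hmy (hR y (by linarith)) (-s₀)
      (by rwa [abs_neg, abs_of_pos hs₀pos]))).2
    obtain ⟨s, hs, hfs⟩ := intermediate_value_Icc' hs₀pos.le hc
      (show t ∈ Icc _ _ by
        constructor
        · have : s₀ * m ≤ s₀ * ‖gradient f y‖ := by gcongr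
          nlinarith
        · simp only [neg_zero, zero_smul, add_zero]; linarith)
    exact ⟨s, hs.1, hs.2, hfs⟩
  set L : Set (EuclideanSpace ℝ (Fin d)) := {z | f z = t + η} with hL
  have hLc : IsClosed L := isClosed_eq hfc continuous_const
  have hLne : L.Nonempty := by
    obtain ⟨x, hx⟩ := hne
    obtain ⟨y, hy, -⟩ := hup x hx
    exact ⟨y, hy⟩
  have hLcomp : IsCompact L := by
    refine Metric.isCompact_of_isClosed_isBounded hLc ?_
    refine (Metric.isBounded_closedBall (x := (0 : EuclideanSpace ℝ (Fin d))) (r := R)).subset ?_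
    intro y hy
    have hy' : f y = t + η := hy
    simpa using hR y (by linarith)
  -- structure of nearest points
  have hnear : ∀ x y, f x = t → f y = t + η → dist x y = infDist x L →
      0 < dist x y ∧ dist x y ≤ s₀ ∧ x = y + (-dist x y) • u y := by
    intro x y hx hy hd
    have hpos : 0 < dist x y := by
      refine dist_pos.2 ?_
      rintro rfl
      linarith
    have hle : dist x y ≤ s₀ := by
      obtain ⟨z, hz, hzd⟩ := hup x hx
      rw [hd]
      exact (infDist_le_dist_of_mem (show z ∈ L from hz)).trans hzd
    refine ⟨hpos, hle, ?_⟩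
    have hmy := hgy y hy
    have hg0 : gradient f y ≠ 0 := by
      intro h0
      rw [h0, norm_zero] at hmy
      linarith
    rcases lagrange_nearest f hf (t + η) x y hy hg0 (fun z hz => by
      rw [hd]; exact infDist_le_dist_of_mem (show z ∈ L from hz)) with h | h
    · exfalso
      have h1 := (abs_le.1 (hmove y hmy (hR y (by linarith)) (dist x y)
        (by rw [abs_of_pos hpos]; linarith))).1
      have h2 : f (y + dist x y • u y) = t := by
        rw [← hx]; exact congrArg f h.symm
      rw [h2, hy] at h1
      have h3 : dist x y * m ≤ dist x y * ‖gradient f y‖ := by gcongr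
      have h4 : M * dist x y ^ 2 ≤ dist x y * (m / 4) := by
        have : M * dist x y ≤ m / 4 := (mul_le_mul_of_nonneg_left hle hM.le).trans hs₀M
        nlinarith
      nlinarith
    · exact h
  have huniq : ∀ x y z, f x = t → f y = t + η → dist x y = infDist x L →
      f z = t + η → dist x z = infDist x L → z = y := by
    intro x y z hx hy hyd hz hzd
    obtain ⟨h1, h2, h3⟩ := hnear x y hx hy hyd
    exact key x y z _ h1 h2 (hgy y hy) (by linarith) (by rw [hz, hy]) h3 (by rw [hzd, hyd])
  have hex : ∀ x, ∃ y, f y = t + η ∧ dist x y = infDist x L := by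
    intro x
    obtain ⟨y, hy, hyd⟩ := hLc.exists_infDist_eq_dist hLne x
    exact ⟨y, hy, hyd.symm⟩
  refine ⟨fun x hx => ?_, ?_⟩
  · obtain ⟨y, hy, hyd⟩ := hex x
    exact ⟨y, ⟨hy, hyd⟩, fun z hz => huniq x y z hx hy hyd hz.1 hz.2⟩
  -- strict monotonicity along normals
  have hmono : ∀ y s s', f y = t + η → 0 ≤ s → s < s' → s' ≤ s₀ →
      f (y + (-s) • u y) = t → f (y + (-s') • u y) = t → False := by
    intro y s s' hy hs hss hs' h1 h2
    have hmy := hgy y hy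
    have hyR : ‖y‖ ≤ R := hR y (by linarith)
    have hxR := hR _ h1.ge
    have hxR' := hR _ h2.ge
    have hl := (hT y (y + (-s) • u y) (by linarith) (by linarith)).2
    have hq := (hT (y + (-s) • u y) (y + (-s') • u y) (by linarith) (by linarith)).1
    have hd : (y + (-s') • u y) - (y + (-s) • u y) = (-(s' - s)) • u y := by module
    rw [hd, h1, h2, real_inner_smul_right, norm_smul, hun y hmy, mul_one, Real.norm_eq_abs,
      sq_abs] at hq
    rw [add_sub_cancel_left, norm_smul, hun y hmy, mul_one, Real.norm_eq_abs, abs_neg,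
      abs_of_nonneg hs] at hl
    have hI := abs_real_inner_le_norm (gradient f (y + (-s) • u y) - gradient f y) (u y)
    rw [hun y hmy, mul_one, inner_sub_left] at hI
    have hyy : inner ℝ (gradient f y) (u y) = ‖gradient f y‖ := by
      nth_rewrite 1 [hgu y hmy]
      rw [real_inner_smul_left, real_inner_self_eq_norm_sq, hun y hmy]; ring
    rw [hyy] at hI
    have hI' := (abs_le.1 (hI.trans hl)).1
    have hq' := (abs_le.1 hq).2
    set J := inner ℝ (gradient f (y + (-s) • u y)) (u y)
    have a1 : M * s ≤ m / 4 := (mul_le_mul_of_nonneg_left (by linarith) hM.le).trans hs₀M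
    have a2 : M * (s' - s) ≤ m / 4 := (mul_le_mul_of_nonneg_left (by linarith) hM.le).trans hs₀M
    have a3 : 3 * m / 4 ≤ J := by linarith
    have a4 : 0 < s' - s := by linarith
    nlinarith
  choose P hPL hPd using hex
  let Q : {x : EuclideanSpace ℝ (Fin d) | f x = t} → L := fun x => ⟨P x, hPL x⟩
  have hQinj : Function.Injective Q := by
    rintro ⟨x, hx⟩ ⟨x', hx'⟩ h
    have hP : P x = P x' := congrArg Subtype.val h
    have hx0 : f x = t := hx
    have hx0' : f x' = t := hx'
    obtain ⟨p1, p2, p3⟩ := hnear x (P x) hx0 (hPL x) (hPd x)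
    obtain ⟨q1, q2, q3⟩ := hnear x' (P x') hx0' (hPL x') (hPd x')
    rw [← hP] at q1 q2 q3
    have e1 : f (P x + (-dist x (P x)) • u (P x)) = t := by rw [← p3]; exact hx0
    have e2 : f (P x + (-dist x' (P x)) • u (P x)) = t := by rw [← q3]; exact hx0'
    apply Subtype.ext
    change x = x'
    rcases lt_trichotomy (dist x (P x)) (dist x' (P x)) with hlt | heq | hlt
    · exact (hmono _ _ _ (hPL x) p1.le hlt q2 e1 e2).elim
    · rw [p3, q3, ← heq]
    · exact (hmono _ _ _ (hPL x) q1.le hlt p2 e2 e1).elim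
  have hQsurj : Function.Surjective Q := by
    rintro ⟨y, hy⟩
    have hy' : f y = t + η := hy
    obtain ⟨s, hs0, hs1, hfs⟩ := hdown y hy'
    have hspos : 0 < s := by
      refine lt_of_le_of_ne hs0 ?_
      rintro rfl
      rw [neg_zero, zero_smul, add_zero] at hfs
      linarith
    refine ⟨⟨y + (-s) • u y, hfs⟩, Subtype.ext ?_⟩
    refine key (y + (-s) • u y) y _ s hspos hs1 (hgy y hy') (by linarith)
      ((hPL _).trans hy'.symm) rfl ?_
    have h1 := infDist_le_dist_of_mem (x := y + (-s) • u y) (show y ∈ L from hy)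
    rw [← hPd, dist_eq_norm _ y, add_sub_cancel_left, norm_smul, hun y (hgy y hy'), mul_one,
      Real.norm_eq_abs, abs_neg, abs_of_pos hspos] at h1
    exact h1
  have : CompactSpace L := isCompact_iff_compactSpace.1 hLcomp
  have : CompactSpace {x : EuclideanSpace ℝ (Fin d) | f x = t} :=
    isCompact_iff_compactSpace.1 hcomp
  have hQcont : Continuous Q := by
    refine continuous_iff_isClosed.2 fun C hC => ?_
    have hgr : IsClosed {p : {x : EuclideanSpace ℝ (Fin d) | f x = t} × L |
        dist (p.1 : EuclideanSpace ℝ (Fin d)) (p.2 : EuclideanSpace ℝ (Fin d)) =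
          infDist (p.1 : EuclideanSpace ℝ (Fin d)) L ∧ p.2 ∈ C} := by
      refine IsClosed.inter (isClosed_eq ?_ ?_) (hC.preimage continuous_snd)
      · fun_prop
      · exact (continuous_infDist_pt L).comp (continuous_subtype_val.comp continuous_fst)
    have himg := isClosedMap_fst_of_compactSpace _ hgr
    convert himg using 1
    ext x
    constructor
    · intro hx
      exact ⟨(x, Q x), ⟨hPd x, hx⟩, rfl⟩
    · rintro ⟨⟨x', y⟩, ⟨hd, hyC⟩, rfl⟩
      have : y = Q x' := Subtype.ext
        (huniq x' (P x') y x'.2 (hPL x') (hPd x') y.2 hd)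
      change Q x' ∈ C
      rw [← this]; exact hyC
  refine ⟨Continuous.homeoOfEquivCompactToT2
    (f := Equiv.ofBijective Q ⟨hQinj, hQsurj⟩) hQcont, fun x => hPd x⟩
end

section
/- Let t ∈ (0, max f) and let x ∈ L_t be such that ∇f(x) ≠ 0. Then for all sufficiently small η > 0, the metric projection of x onto L_{t+η} is a singleton, i.e., x has a unique nearest point in L_{t+η}. -/
open Metric Set Filter Topology MeasureTheory

/-- Intermediate value: a point of level `c` at least as close as any point of level `≥ c`. -/
lemma level_closer {E : Type*} [NormedAddCommGroup E] [NormedSpace ℝ E] (f : E → ℝ)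
    (hf : Continuous f) (x p : E) (c : ℝ) (h1 : f x ≤ c) (h2 : c ≤ f p) :
    ∃ y, f y = c ∧ dist x y ≤ dist x p := by
  have hpre : IsPreconnected (closedBall x (dist x p)) := (convex_closedBall x _).isPreconnected
  have hx : x ∈ closedBall x (dist x p) := mem_closedBall_self dist_nonneg
  have hp : p ∈ closedBall x (dist x p) := by simp [dist_comm]
  obtain ⟨y, hy, hyc⟩ := hpre.intermediate_value hx hp hf.continuousOn ⟨h1, h2⟩
  exact ⟨y, hyc, by simpa [dist_comm] using hy⟩

set_option maxHeartbeats 2000000 in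
/-- If `x ∈ L_t` is not a critical point, then for all sufficiently small
`η > 0` the metric projection of `x` onto `L_{t+η}` is a singleton, i.e. `x` has a unique
nearest point in `L_{t+η}`. -/
theorem projection_singleton {d : ℕ} (f : EuclideanSpace ℝ (Fin d) → ℝ)
    (hf : ContDiff ℝ 2 f) (hf_nonneg : ∀ x, 0 ≤ f x) (hf_int : ∫ x, f x = 1)
    (t : ℝ) (ht : 0 < t) (ht_max : ∃ z, t < f z)
    (x : EuclideanSpace ℝ (Fin d)) (hx : f x = t) (hgx : gradient f x ≠ 0) :
    ∃ η₀ > 0, ∀ η : ℝ, 0 < η → η < η₀ →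
      ∃! y, y ∈ {z : EuclideanSpace ℝ (Fin d) | f z = t + η} ∧
        dist x y = Metric.infDist x {z : EuclideanSpace ℝ (Fin d) | f z = t + η} := by
  have hcont : Continuous f := hf.continuous
  have hdiff : Differentiable ℝ f := hf.differentiable (by norm_num)
  have hf1 : ContDiff ℝ 1 (fderiv ℝ f) := hf.fderiv_right (by norm_num)
  obtain ⟨K, T, hT, hK⟩ := hf1.contDiffAt.exists_lipschitzOnWith (x := x)
  set G : ℝ := ‖gradient f x‖ with hG
  have hGpos : 0 < G := norm_pos_iff.2 hgx
  obtain ⟨u, hu1, huG⟩ : ∃ u : EuclideanSpace ℝ (Fin d), ‖u‖ = 1 ∧ fderiv ℝ f x u = G := by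
    refine ⟨G⁻¹ • gradient f x, ?_, ?_⟩
    · rw [norm_smul, norm_inv, norm_norm, ← hG]; field_simp
    · have h : fderiv ℝ f x (gradient f x) = G ^ 2 := by
        rw [hG, ← real_inner_self_eq_norm_sq]
        conv_rhs => rw [gradient]
        rw [InnerProductSpace.toDual_symm_apply]; rfl
      rw [map_smul, h, smul_eq_mul]; field_simp
  set M : ℝ := K + 1 with hM
  have hMpos : 0 < M := by positivity
  have hT2 : ∀ᶠ y in 𝓝 x, y ∈ T ∧ ‖fderiv ℝ f y - fderiv ℝ f x‖ < G / 2 := by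
    refine Filter.Eventually.and hT ?_
    have := hf1.continuous.tendsto x
    rw [Metric.tendsto_nhds] at this
    simpa [dist_eq_norm] using this (G / 2) (by positivity)
  obtain ⟨r, hr, hball⟩ := Metric.eventually_nhds_iff_ball.1 hT2
  -- increase in direction u
  have hinc : ∀ m ∈ ball x r, ∀ s : ℝ, 0 ≤ s → m + s • u ∈ ball x r →
      f m + s * (G / 2) ≤ f (m + s • u) := by
    intro m hm s hs hms
    have := (convex_ball x r).norm_image_sub_le_of_norm_hasFDerivWithin_le' (f := f)
      (f' := fderiv ℝ f) (φ := fderiv ℝ f x) (C := G / 2)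
      (fun y _ => (hdiff y).hasFDerivAt.hasFDerivWithinAt) (fun y hy => (hball y hy).2.le) hm hms
    rw [add_sub_cancel_left, norm_smul, hu1, map_smul, huG, Real.norm_eq_abs, Real.norm_eq_abs,
      abs_of_nonneg hs, smul_eq_mul] at this
    have := (abs_le.1 this).1
    nlinarith
  obtain ⟨R, hR, hRr, hRG⟩ : ∃ R > 0, R < r / 2 ∧ R < G / (4 * M) := by
    have h1 : 0 < min (r / 2) (G / (4 * M)) := by positivity
    exact ⟨min (r / 2) (G / (4 * M)) / 2, by positivity,
      (half_lt_self h1).trans_le (min_le_left _ _), (half_lt_self h1).trans_le (min_le_right _ _)⟩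
  refine ⟨R * (G / 2), by positivity, fun η hη hη0 => ?_⟩
  set c := t + η with hc
  set L := {z : EuclideanSpace ℝ (Fin d) | f z = c} with hL
  have hdistp : dist x (x + R • u) = R := by
    simp [dist_eq_norm, norm_smul, hu1, abs_of_pos hR]
  obtain ⟨z, hz, hzR⟩ : ∃ z, f z = c ∧ dist x z ≤ R := by
    have := hinc x (mem_ball_self hr) R hR.le (by rw [mem_ball, dist_comm, hdistp]; linarith)
    obtain ⟨z, h1, h2⟩ := level_closer f hcont x (x + R • u) c (by linarith) (by linarith)
    exact ⟨z, h1, h2.trans hdistp.le⟩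
  have hLcl : IsClosed L := isClosed_eq hcont continuous_const
  have hne : L.Nonempty := ⟨z, hz⟩
  set ρ := infDist x L with hρ
  have hρR : ρ ≤ R := (infDist_le_dist_of_mem (s := L) hz).trans hzR
  obtain ⟨y, hyL, hy⟩ := hLcl.exists_infDist_eq_dist hne x
  have key : ∀ p, c ≤ f p → ρ ≤ dist x p := by
    intro p hp
    obtain ⟨q, hq, hqd⟩ := level_closer f hcont x p c (by linarith) hp
    exact (infDist_le_dist_of_mem (s := L) hq).trans hqd
  refine ⟨y, ⟨hyL, hy.symm⟩, ?_⟩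
  rintro w ⟨hwL, hw⟩
  by_contra hwy
  have hyL' : f y = c := hyL
  have hwL' : f w = c := hwL
  -- midpoint and half-difference
  set m := (1 / 2 : ℝ) • (y + w) with hm
  set e := (1 / 2 : ℝ) • (y - w) with he
  have hye : y = m + e := by rw [hm, he]; module
  have hwe : w = m - e := by rw [hm, he]; module
  set δ := ‖e‖ with hδ
  have hδpos : 0 < δ := by
    refine norm_pos_iff.2 fun h0 => hwy ?_
    rw [hye, hwe, h0]; simp
  set a := ‖m - x‖ with ha
  have hy1 : ‖(m - x) + e‖ = ρ := by
    rw [hρ, hy, dist_comm, dist_eq_norm]; congr 1; rw [hye]; abel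
  have hw1 : ‖(m - x) - e‖ = ρ := by
    rw [← hw, dist_comm, dist_eq_norm]; congr 1; rw [hwe]; abel
  have hpar : a ^ 2 + δ ^ 2 = ρ ^ 2 := by
    have := parallelogram_law_with_norm ℝ (m - x) e
    rw [hy1, hw1] at this
    nlinarith
  have hρ0 : 0 ≤ ρ := infDist_nonneg
  have ha0 : 0 ≤ a := norm_nonneg _
  have haρ : a < ρ := by nlinarith
  have hδρ : δ ≤ ρ := by nlinarith
  have hsub : closedBall m δ ⊆ ball x r := by
    intro q hq
    rw [mem_closedBall] at hq
    have h1 : dist q x ≤ dist q m + dist m x := dist_triangle _ _ _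
    have h2 : dist m x = a := dist_eq_norm _ _
    rw [mem_ball]; linarith
  have hmm : m ∈ closedBall m δ := mem_closedBall_self hδpos.le
  have htay : ∀ q ∈ closedBall m δ, |f q - f m - fderiv ℝ f m (q - m)| ≤ (M * δ) * ‖q - m‖ := by
    intro q hq
    refine (convex_closedBall m δ).norm_image_sub_le_of_norm_hasFDerivWithin_le' (f := f)
      (f' := fderiv ℝ f) (φ := fderiv ℝ f m) (C := M * δ)
      (fun y _ => (hdiff y).hasFDerivAt.hasFDerivWithinAt) (fun v hv => ?_) hmm hq
    have h1 := hK.dist_le_mul v (hball v (hsub hv)).1 m (hball m (hsub hmm)).1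
    rw [dist_eq_norm (fderiv ℝ f v)] at h1
    have h2 : dist v m ≤ δ := hv
    have h3 : (0 : ℝ) ≤ K := K.2
    have h5 : (K : ℝ) * dist v m ≤ M * δ :=
      mul_le_mul (by rw [hM]; linarith) h2 dist_nonneg hMpos.le
    exact h1.trans h5
  have hfm : c - M * δ ^ 2 ≤ f m := by
    have h1 := htay (m + e) (by simp [hδ])
    have h2 := htay (m - e) (by simp [hδ, dist_eq_norm])
    rw [← hye, hyL', hye, add_sub_cancel_left, ← hδ] at h1
    rw [← hwe, hwL', hwe, show m - e - m = -e by abel, norm_neg, map_neg, ← hδ] at h2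
    have h1 := (abs_le.1 h1).2
    have h2 := (abs_le.1 h2).2
    nlinarith
  set s := 2 * M * δ ^ 2 / G with hs
  have hs0 : 0 ≤ s := by positivity
  have hsG : s * (G / 2) = M * δ ^ 2 := by rw [hs]; field_simp
  have hsρ : a + s < ρ := by
    have h1 : ρ * (4 * M) < G := by
      rw [lt_div_iff₀ (by positivity)] at hRG
      nlinarith
    have h2 : s * G = (2 * M) * ((ρ - a) * (ρ + a)) := by
      rw [show (ρ - a) * (ρ + a) = δ ^ 2 by linarith [hpar]]; linarith
    have h3 : 0 < ρ - a := by linarith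
    have h4 : (2 * M) * (ρ + a) < G := by nlinarith
    have h5 : s * G < (ρ - a) * G := by
      rw [h2]; nlinarith [mul_lt_mul_of_pos_left h4 h3]
    linarith [lt_of_mul_lt_mul_right h5 hGpos.le]
  have hdm : dist x (m + s • u) ≤ a + s := by
    rw [dist_comm, dist_eq_norm, show m + s • u - x = (m - x) + s • u by abel]
    refine (norm_add_le _ _).trans ?_
    rw [norm_smul, hu1, Real.norm_eq_abs, abs_of_nonneg hs0, mul_one]
  have hfin := hinc m (hsub hmm) s hs0 (by rw [mem_ball, dist_comm]; linarith)
  have := key (m + s • u) (by linarith)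
  linarith
end

section
/- Let t ∈ (0, max f) and let x ∈ L_t be such that ∇f(x) ≠ 0. Then (P_{t,η}(x) − x)/η converges to ∇f(x)/‖∇f(x)‖² as η → 0⁺, where P_{t,η}(x) denotes the (eventually unique) nearest point of L_{t+η} to x. -/
open Metric Set Filter Topology MeasureTheory

/-- If `x ∈ L_t` with `∇f(x) ≠ 0`, and `P η` is (eventually, as `η → 0⁺`) a
nearest point to `x` in `L_{t+η}`, then `(P η - x)/η → ∇f(x)/‖∇f(x)‖²` as `η → 0⁺`. -/
theorem projection_infinitesimal {d : ℕ} (f : EuclideanSpace ℝ (Fin d) → ℝ)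
    (hf : ContDiff ℝ 2 f) (hf_nonneg : ∀ x, 0 ≤ f x) (hf_int : ∫ x, f x = 1)
    (t : ℝ) (ht : 0 < t) (ht_max : ∃ z, t < f z)
    (x : EuclideanSpace ℝ (Fin d)) (hx : f x = t) (hgx : gradient f x ≠ 0)
    (P : ℝ → EuclideanSpace ℝ (Fin d))
    (hP : ∀ᶠ η in 𝓝[>] (0 : ℝ),
      P η ∈ {z : EuclideanSpace ℝ (Fin d) | f z = t + η} ∧
      dist x (P η) = Metric.infDist x {z : EuclideanSpace ℝ (Fin d) | f z = t + η}) :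
    Tendsto (fun η : ℝ => η⁻¹ • (P η - x)) (𝓝[>] (0 : ℝ))
      (𝓝 ((‖gradient f x‖ ^ 2)⁻¹ • gradient f x)) := by
  set g := gradient f x with hg
  have hG : 0 < ‖g‖ := norm_pos_iff.mpr hgx
  have hdiff : DifferentiableAt ℝ f x := (hf.differentiable (by norm_num)) x
  have hgrad : HasGradientAt f g x := hdiff.hasGradientAt
  have hfd := hgrad.hasFDerivAt
  have hpos : ∀ᶠ η in 𝓝[>] (0 : ℝ), 0 < η := eventually_mem_nhdsWithin
  -- upper bound on the distance
  have hub : ∀ c : ℝ, 1 < c → ∀ᶠ η in 𝓝[>] (0 : ℝ), ‖P η - x‖ ≤ c / ‖g‖ * η := by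
    intro c hc
    set w : EuclideanSpace ℝ (Fin d) := (c / ‖g‖ ^ 2) • g with hw
    have hnw : ‖w‖ = c / ‖g‖ := by
      rw [hw, norm_smul, Real.norm_of_nonneg (by positivity)]
      field_simp
    have hline : HasDerivAt (fun s : ℝ => x + s • w) w 0 := by
      simpa using ((hasDerivAt_id (0 : ℝ)).smul_const w).const_add x
    have hφ : HasDerivAt (fun s : ℝ => f (x + s • w)) c 0 := by
      have hfd' : HasFDerivAt f (InnerProductSpace.toDual ℝ _ g) (x + (0 : ℝ) • w) := by
        simpa using hfd
      have := hfd'.comp_hasDerivAt (0 : ℝ) hline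
      have hval : (InnerProductSpace.toDual ℝ _ g) w = c := by
        rw [InnerProductSpace.toDual_apply_apply, hw, inner_smul_right, real_inner_self_eq_norm_sq]
        field_simp
      rw [hval] at this
      exact this
    have hsl := (hasDerivAt_iff_tendsto_slope.mp hφ).mono_left
      (nhdsWithin_mono (0 : ℝ) (fun y (hy : 0 < y) => ne_of_gt hy))
    filter_upwards [hsl.eventually (eventually_gt_nhds hc), hpos, hP] with η h1 h2 h3
    rw [slope_def_field] at h1
    simp only [zero_smul, add_zero, sub_zero, hx] at h1
    rw [lt_div_iff₀ h2] at h1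
    have hcont : ContinuousOn (fun s : ℝ => f (x + s • w)) (Icc 0 η) := by
      have := hf.continuous
      fun_prop
    obtain ⟨s, hs, hs'⟩ := intermediate_value_Icc h2.le hcont
      (show t + η ∈ _ from ⟨by simp [hx, h2.le], by linarith⟩)
    have h4 : dist x (P η) ≤ dist x (x + s • w) := by
      rw [h3.2]
      exact Metric.infDist_le_dist_of_mem hs'
    rw [dist_comm, dist_eq_norm, dist_eq_norm] at h4
    refine h4.trans ?_
    rw [sub_add_cancel_left, norm_neg, norm_smul, Real.norm_of_nonneg hs.1, hnw, mul_comm]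
    have : 0 < c / ‖g‖ := by positivity
    exact mul_le_mul_of_nonneg_left hs.2 this.le
  -- first-order expansion
  have hin : Tendsto (fun η : ℝ => inner ℝ g (η⁻¹ • (P η - x))) (𝓝[>] (0 : ℝ)) (𝓝 1) := by
    have h2 := hub 2 (by norm_num)
    have hPx : Tendsto P (𝓝[>] (0 : ℝ)) (𝓝 x) := by
      rw [tendsto_iff_norm_sub_tendsto_zero]
      refine squeeze_zero' (Eventually.of_forall fun _ => norm_nonneg _) h2 ?_
      have : Tendsto (fun η : ℝ => 2 / ‖g‖ * η) (𝓝 0) (𝓝 (2 / ‖g‖ * 0)) :=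
        (continuous_const.mul continuous_id).tendsto 0
      rw [mul_zero] at this
      exact this.mono_left nhdsWithin_le_nhds
    have hO : (fun η => P η - x) =O[𝓝[>] (0 : ℝ)] (fun η : ℝ => η) := by
      refine Asymptotics.IsBigO.of_bound (2 / ‖g‖) ?_
      filter_upwards [h2, hpos] with η h h'
      rwa [Real.norm_of_nonneg h'.le]
    have ho := ((hasFDerivAt_iff_isLittleO.mp hfd).comp_tendsto hPx).trans_isBigO hO
    have h0 := ho.tendsto_div_nhds_zero
    have h1 := h0.const_sub 1
    rw [sub_zero] at h1
    refine h1.congr' ?_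
    filter_upwards [hpos, hP] with η h h3
    have h3' : f (P η) = t + η := h3.1
    simp only [Function.comp, InnerProductSpace.toDual_apply_apply, h3', hx, inner_smul_right]
    field_simp
    ring
  rw [Metric.tendsto_nhds]
  intro ε hε
  have hδ : 0 < ε ^ 2 * ‖g‖ ^ 2 := by positivity
  have hc : 1 < √(1 + ε ^ 2 * ‖g‖ ^ 2 / 2) := by
    rw [Real.lt_sqrt (by norm_num)]; linarith
  have hcs : √(1 + ε ^ 2 * ‖g‖ ^ 2 / 2) ^ 2 = 1 + ε ^ 2 * ‖g‖ ^ 2 / 2 :=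
    Real.sq_sqrt (by positivity)
  set c := √(1 + ε ^ 2 * ‖g‖ ^ 2 / 2)
  filter_upwards [hub c hc, hpos, hin.eventually (eventually_gt_nhds
    (show 1 - ε ^ 2 * ‖g‖ ^ 2 / 4 < 1 by linarith))] with η h1 h2 h3
  set v := η⁻¹ • (P η - x) with hv
  have hvn : ‖v‖ * ‖g‖ ≤ c := by
    rw [hv, norm_smul, Real.norm_of_nonneg (by positivity)]
    calc η⁻¹ * ‖P η - x‖ * ‖g‖ ≤ η⁻¹ * (c / ‖g‖ * η) * ‖g‖ := by gcongr
      _ = c := by field_simp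
  have hvn2 : (‖v‖ * ‖g‖) ^ 2 ≤ c ^ 2 := by gcongr
  rw [dist_eq_norm]
  refine lt_of_pow_lt_pow_left₀ 2 hε.le ?_
  rw [norm_sub_sq_real, inner_smul_right, norm_smul (‖g‖ ^ 2)⁻¹ g, real_inner_comm,
    Real.norm_of_nonneg (by positivity)]
  have key : (‖v‖ ^ 2 - 2 * ((‖g‖ ^ 2)⁻¹ * inner ℝ g v) + ((‖g‖ ^ 2)⁻¹ * ‖g‖) ^ 2) * ‖g‖ ^ 2
      = (‖v‖ * ‖g‖) ^ 2 - 2 * inner ℝ g v + 1 := by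
    field_simp
  refine lt_of_mul_lt_mul_right ?_ (sq_nonneg ‖g‖)
  rw [key]
  linarith
end

section
/- Suppose t ∈ (0, max f), the level set L_t is nonempty and compact, and there are no critical points of f on L_t. Then for all sufficiently small η > 0, the metric projection P_{t,η} onto L_{t+η}, restricted to L_t, is a diffeomorphism (a continuously differentiable bijection with continuously differentiable inverse) from L_t onto L_{t+η}. -/
open Metric Set Filter Topology MeasureTheory

/-- A `C¹` map injective on a compact set with injective derivatives there is injective with
invertible derivatives on a neighborhood. -/
lemma aux_nhd {X : Type*} [NormedAddCommGroup X] [NormedSpace ℝ X] [FiniteDimensional ℝ X]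
    (Φ : X → X) (hΦ : ContDiff ℝ 1 Φ) (K : Set X) (hK : IsCompact K) (hinj : InjOn Φ K)
    (hd : ∀ p ∈ K, ∀ v, fderiv ℝ Φ p v = 0 → v = 0) :
    ∃ W, IsOpen W ∧ K ⊆ W ∧ InjOn Φ W ∧
      ∀ p ∈ W, ∃ e : X ≃L[ℝ] X, HasStrictFDerivAt Φ (e : X →L[ℝ] X) p := by
  have : CompleteSpace X := FiniteDimensional.complete ℝ X
  have hstrict : ∀ p, HasStrictFDerivAt Φ (fderiv ℝ Φ p) p := fun p =>
    hΦ.contDiffAt.hasStrictFDerivAt one_ne_zero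
  have hcont : Continuous (fderiv ℝ Φ) := hΦ.continuous_fderiv one_ne_zero
  set R : Set (X →L[ℝ] X) := Set.range (ContinuousLinearEquiv.toContinuousLinearMap) with hR
  have hRo : IsOpen R := ContinuousLinearEquiv.isOpen
  have hKR : K ⊆ fderiv ℝ Φ ⁻¹' R := by
    intro p hp
    have hi : Function.Injective (fderiv ℝ Φ p : X →ₗ[ℝ] X) := by
      rw [injective_iff_map_eq_zero]
      exact hd p hp
    refine ⟨(LinearEquiv.ofInjectiveEndo _ hi).toContinuousLinearEquiv, ?_⟩
    ext v
    simp
  have hloc : ∀ p ∈ K, ∃ u ∈ 𝓝 p, InjOn Φ u := by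
    intro p hp
    obtain ⟨e, he⟩ := hKR hp
    have hs : HasStrictFDerivAt Φ (e : X →L[ℝ] X) p := by
      rw [he]; exact hstrict p
    refine ⟨(hs.toOpenPartialHomeomorph Φ).source,
      (hs.toOpenPartialHomeomorph Φ).open_source.mem_nhds
        hs.mem_toOpenPartialHomeomorph_source, ?_⟩
    have := (hs.toOpenPartialHomeomorph Φ).injOn
    rwa [hs.toOpenPartialHomeomorph_coe] at this
  obtain ⟨W, hWo, hKW, hWi⟩ := hinj.exists_isOpen_superset hK
    (fun p _ => hΦ.continuous.continuousAt) hloc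
  refine ⟨W ∩ fderiv ℝ Φ ⁻¹' R, hWo.inter (hRo.preimage hcont), subset_inter hKW hKR,
    hWi.mono inter_subset_left, ?_⟩
  rintro p ⟨_, e, he⟩
  exact ⟨e, by rw [he]; exact hstrict p⟩

lemma aux_open {X : Type*} [NormedAddCommGroup X] [NormedSpace ℝ X] [CompleteSpace X]
    (Φ : X → X) (W : Set X) (hW : IsOpen W)
    (hd : ∀ p ∈ W, ∃ e : X ≃L[ℝ] X, HasStrictFDerivAt Φ (e : X →L[ℝ] X) p) :
    IsOpen (Φ '' W) := by
  rw [isOpen_iff_mem_nhds]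
  rintro _ ⟨p, hp, rfl⟩
  obtain ⟨e, he⟩ := hd p hp
  rw [← he.map_nhds_eq_of_equiv]
  exact image_mem_map (hW.mem_nhds hp)

lemma aux_inv {X : Type*} [NormedAddCommGroup X] [NormedSpace ℝ X] [CompleteSpace X]
    (Φ : X → X) (hΦ : ContDiff ℝ 1 Φ) (W : Set X) (hW : IsOpen W) (hi : InjOn Φ W)
    (hd : ∀ p ∈ W, ∃ e : X ≃L[ℝ] X, HasStrictFDerivAt Φ (e : X →L[ℝ] X) p) :
    ContDiffOn ℝ 1 (Function.invFunOn Φ W) (Φ '' W) := by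
  rintro _ ⟨p, hp, rfl⟩
  obtain ⟨e, he⟩ := hd p hp
  have hc : ContDiffAt ℝ 1 (he.localInverse Φ e p) (Φ p) :=
    ContDiffAt.to_localInverse (hΦ.contDiffAt (x := p)) he.hasFDerivAt one_ne_zero
  refine ContDiffAt.contDiffWithinAt (hc.congr_of_eventuallyEq ?_)
  have h1 := he.eventually_right_inverse
  have h2 : ∀ᶠ q in 𝓝 (Φ p), he.localInverse Φ e p q ∈ W := by
    apply he.localInverse_continuousAt
    rw [he.localInverse_apply_image]
    exact hW.mem_nhds hp
  filter_upwards [h1, h2] with q hq1 hq2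
  have hex : ∃ a ∈ W, Φ a = q := ⟨_, hq2, hq1⟩
  exact hi (Function.invFunOn_mem hex) hq2 ((Function.invFunOn_eq hex).trans hq1.symm)

lemma aux_grad {E : Type*} [NormedAddCommGroup E] [InnerProductSpace ℝ E] [CompleteSpace E]
    (f : E → ℝ) (hf : ContDiff ℝ 2 f) : ContDiff ℝ 1 (gradient f) := by
  have h : ContDiff ℝ 1 (fderiv ℝ f) := hf.fderiv_right (by norm_num)
  exact (InnerProductSpace.toDual ℝ E).symm.contDiff.comp h

lemma aux_fderiv_step {E : Type*} [NormedAddCommGroup E] [InnerProductSpace ℝ E] [CompleteSpace E]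
    (g : E → E) (hg : ContDiff ℝ 1 g) (y : E) :
    HasFDerivAt (fun p : E × ℝ => p.1 - p.2 • g p.1)
      (ContinuousLinearMap.fst ℝ E ℝ -
        (ContinuousLinearMap.snd ℝ E ℝ).smulRight (g y)) (y, 0) := by
  have h1 : HasFDerivAt (fun p : E × ℝ => p.1) (ContinuousLinearMap.fst ℝ E ℝ) (y, (0:ℝ)) :=
    hasFDerivAt_fst
  have h2 : HasFDerivAt (fun p : E × ℝ => p.2) (ContinuousLinearMap.snd ℝ E ℝ) (y, (0:ℝ)) :=
    hasFDerivAt_snd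
  have h3 : HasFDerivAt (fun p : E × ℝ => g p.1)
      ((fderiv ℝ g y).comp (ContinuousLinearMap.fst ℝ E ℝ)) (y, (0:ℝ)) :=
    HasFDerivAt.comp (y, (0:ℝ)) ((hg.differentiable one_ne_zero y).hasFDerivAt) h1
  have h4 := h1.sub (h2.smul h3)
  refine h4.congr_fderiv ?_
  ext v <;> simp

lemma aux_F {E : Type*} [NormedAddCommGroup E] [InnerProductSpace ℝ E] [CompleteSpace E]
    (f : E → ℝ) (hf : ContDiff ℝ 2 f) (y : E) (hy : gradient f y ≠ 0) (v : E × ℝ)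
    (hv : fderiv ℝ (fun p : E × ℝ => (p.1 - p.2 • gradient f p.1, f p.1)) (y, 0) v = 0) :
    v = 0 := by
  have h1 := aux_fderiv_step (gradient f) (aux_grad f hf) y
  have h2 : HasFDerivAt (fun p : E × ℝ => f p.1)
      ((fderiv ℝ f y).comp (ContinuousLinearMap.fst ℝ E ℝ)) (y, (0:ℝ)) :=
    HasFDerivAt.comp (y, (0:ℝ)) ((hf.differentiable two_ne_zero y).hasFDerivAt) hasFDerivAt_fst
  rw [(h1.prodMk h2).fderiv] at hv
  obtain ⟨v, s⟩ := v
  simp only [ContinuousLinearMap.prod_apply, _root_.sub_apply,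
    ContinuousLinearMap.coe_fst', ContinuousLinearMap.smulRight_apply,
    ContinuousLinearMap.coe_snd', ContinuousLinearMap.comp_apply, Prod.mk_eq_zero] at hv ⊢
  obtain ⟨ha, hb⟩ := hv
  rw [← inner_gradient_left, sub_eq_zero.1 ha, inner_smul_right] at hb
  have hs : s = 0 := by
    rcases mul_eq_zero.1 hb with h | h
    · exact h
    · exact absurd (inner_self_eq_zero.1 h) hy
  subst hs
  simpa using ha

lemma aux_G {E : Type*} [NormedAddCommGroup E] [InnerProductSpace ℝ E] [CompleteSpace E]
    (f : E → ℝ) (hf : ContDiff ℝ 2 f) (y : E) (hy : gradient f y ≠ 0) (v : E × ℝ)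
    (hv : fderiv ℝ (fun p : E × ℝ => (p.1, f (p.1 - p.2 • gradient f p.1))) (y, 0) v = 0) :
    v = 0 := by
  have h1 := aux_fderiv_step (gradient f) (aux_grad f hf) y
  have h0 : HasFDerivAt f (fderiv ℝ f y)
      ((fun p : E × ℝ => p.1 - p.2 • gradient f p.1) (y, (0:ℝ))) := by
    simpa using (hf.differentiable two_ne_zero y).hasFDerivAt
  have h2 := HasFDerivAt.comp (y, (0:ℝ)) h0 h1
  have h3 : HasFDerivAt (fun p : E × ℝ => p.1) (ContinuousLinearMap.fst ℝ E ℝ) (y, (0:ℝ)) :=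
    hasFDerivAt_fst
  have h4 := (h3.prodMk h2).fderiv
  simp only [Function.comp_def] at h4
  rw [h4] at hv
  obtain ⟨v, s⟩ := v
  simp only [ContinuousLinearMap.prod_apply, _root_.sub_apply,
    ContinuousLinearMap.coe_fst', ContinuousLinearMap.smulRight_apply,
    ContinuousLinearMap.coe_snd', ContinuousLinearMap.comp_apply, Prod.mk_eq_zero] at hv ⊢
  obtain ⟨ha, hb⟩ := hv
  subst ha
  rw [← inner_gradient_left, zero_sub, inner_neg_right, inner_smul_right] at hb
  refine ⟨rfl, ?_⟩
  rcases mul_eq_zero.1 (neg_eq_zero.1 hb) with h | h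
  · exact h
  · exact absurd (inner_self_eq_zero.1 h) hy

/-- Lagrange multipliers for a nearest point. -/
lemma aux_lagrange {E : Type*} [NormedAddCommGroup E] [InnerProductSpace ℝ E] [CompleteSpace E]
    (f : E → ℝ) (hf : ContDiff ℝ 2 f) (x y : E) (hy : gradient f y ≠ 0)
    (hmin : ∀ z, f z = f y → dist x y ≤ dist x z) :
    ∃ s : ℝ, y - s • gradient f y = x := by
  have hs : HasStrictFDerivAt f (fderiv ℝ f y) y :=
    hf.contDiffAt.hasStrictFDerivAt two_ne_zero
  have hφ : HasStrictFDerivAt (fun z : E => ‖z - x‖ ^ 2) (2 • (innerSL ℝ (y - x))) y := by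
    have h := (hasStrictFDerivAt_norm_sq (y - x)).comp y
      ((hasStrictFDerivAt_id (𝕜 := ℝ) y).sub_const x)
    simpa [Function.comp_def] using h
  have hext : IsLocalExtrOn (fun z : E => ‖z - x‖ ^ 2) {z | f z = f y} y := by
    left
    apply IsMinOn.localize
    intro z hz
    have := hmin z hz
    rw [dist_comm x y, dist_comm x z, dist_eq_norm, dist_eq_norm] at this
    show ‖y - x‖ ^ 2 ≤ ‖z - x‖ ^ 2
    gcongr
  obtain ⟨a, b, hab, h⟩ := hext.exists_multipliers_of_hasStrictFDerivAt_1d hs hφ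
  have key : a • gradient f y + (2 * b) • (y - x) = 0 := by
    apply ext_inner_right ℝ
    intro v
    have := congrArg (fun L => L v) h
    simp only [_root_.add_apply, _root_.smul_apply,
      innerSL_apply_apply, _root_.zero_apply, smul_eq_mul, nsmul_eq_mul] at this
    rw [inner_add_left, inner_smul_left, inner_smul_left, inner_zero_left, inner_gradient_left]
    simp only [conj_trivial]
    push_cast at this
    linarith
  have hb : b ≠ 0 := by
    rintro rfl
    simp only [mul_zero, zero_smul, add_zero, smul_eq_zero] at key
    rcases key with rfl | h
    · exact hab rfl
    · exact hy h
  refine ⟨-(a / (2 * b)), ?_⟩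
  have h2 : y - x = -((a / (2 * b)) • gradient f y) := by
    have h3 : (2 * b) • (y - x) = -(a • gradient f y) := by
      rw [eq_neg_iff_add_eq_zero, add_comm]; exact key
    have h4 : (2 * b) ≠ 0 := by positivity
    calc y - x = (2 * b)⁻¹ • ((2 * b) • (y - x)) := by rw [smul_smul, inv_mul_cancel₀ h4, one_smul]
      _ = _ := by rw [h3, smul_neg, smul_smul]; congr 2; ring
  rw [neg_smul, ← h2]
  abel

/-- superlevel sets are compact -/
lemma aux_compact {E : Type*} [NormedAddCommGroup E] [InnerProductSpace ℝ E]
    [FiniteDimensional ℝ E] [MeasurableSpace E] [BorelSpace E]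
    (f : E → ℝ) (hf : Continuous f) (hi : Integrable f (volume : Measure E)) (t : ℝ) (ht : 0 < t)
    (hcomp : IsCompact {x | f x = t}) : IsCompact {x | t ≤ f x} := by
  obtain ⟨R, hR0, hR⟩ := hcomp.isBounded.exists_pos_norm_le
  refine Metric.isCompact_of_isClosed_isBounded (isClosed_le continuous_const hf) ?_
  refine (isBounded_iff_forall_norm_le).2 ⟨R, fun x₀ hx₀ => ?_⟩
  by_contra! hlt
  have hx0 : 0 < ‖x₀‖ := hR0.trans hlt
  set H : Set E := {x | R * ‖x₀‖ < inner ℝ x₀ x} with hH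
  have hHout : ∀ x ∈ H, R < ‖x‖ := by
    intro x hx
    have h1 : inner ℝ x₀ x ≤ ‖x₀‖ * ‖x‖ := real_inner_le_norm _ _
    have h2 : R * ‖x₀‖ < ‖x₀‖ * ‖x‖ := lt_of_lt_of_le hx h1
    nlinarith
  have hHne : ∀ x ∈ H, f x ≠ t := fun x hx h => absurd (hR x h) (not_le.2 (hHout x hx))
  have hconv : Convex ℝ H := convex_halfSpace_gt (innerSL ℝ x₀).isBoundedLinearMap.toIsLinearMap _
  have hx0H : x₀ ∈ H := by
    show R * ‖x₀‖ < inner ℝ x₀ x₀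
    rw [real_inner_self_eq_norm_mul_norm]
    exact mul_lt_mul_of_pos_right hlt hx0
  have hsub : H ⊆ {x | t ≤ f x} := by
    intro x hx
    by_contra hc
    have hc' : f x < t := not_le.1 hc
    obtain ⟨z, hz, hzt⟩ := hconv.isPreconnected.intermediate_value hx hx0H hf.continuousOn
      ⟨hc'.le, hx₀⟩
    exact hHne z hz hzt
  have hfin : (volume : Measure E) H < ⊤ :=
    (measure_mono hsub).trans_lt (hi.measure_ge_lt_top ht)
  have hmono : Monotone (fun n : ℕ => (fun x => (n : ℝ) • x₀ + x) ⁻¹' H) := by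
    intro m n hmn x hx
    simp only [hH, mem_preimage, mem_ofPred_eq, inner_add_right, inner_smul_right] at hx ⊢
    have : (m : ℝ) ≤ n := by exact_mod_cast hmn
    have h0 : 0 ≤ inner ℝ x₀ x₀ := real_inner_self_nonneg
    nlinarith
  have hun : (⋃ n : ℕ, (fun x => (n : ℝ) • x₀ + x) ⁻¹' H) = univ := by
    rw [eq_univ_iff_forall]
    intro x
    obtain ⟨n, hn⟩ := exists_nat_gt ((R * ‖x₀‖ - inner ℝ x₀ x) / inner ℝ x₀ x₀)
    have h0 : 0 < inner ℝ x₀ x₀ := by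
      rw [real_inner_self_eq_norm_mul_norm]; positivity
    rw [div_lt_iff₀ h0] at hn
    refine mem_iUnion.2 ⟨n, ?_⟩
    simp only [hH, mem_preimage, mem_ofPred_eq, inner_add_right, inner_smul_right]
    linarith
  have hnt : Nontrivial E := ⟨⟨x₀, 0, norm_pos_iff.1 hx0⟩⟩
  have : NoncompactSpace E := NormedSpace.noncompactSpace ℝ E
  have h1 := hmono.measure_iUnion (μ := (volume : Measure E))
  rw [hun, measure_univ_of_isAddLeftInvariant] at h1
  simp only [measure_preimage_add, ciSup_const] at h1
  exact hfin.ne h1.symm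

/-- If `L_t` is nonempty, compact, and free of critical points, then for all
sufficiently small `η > 0` the metric projection onto `L_{t+η}` is well-defined on `L_t`
and restricts to a diffeomorphism from `L_t` onto `L_{t+η}`: there are `C¹` maps `P`, `Q`
defined on open neighborhoods of `L_t` and `L_{t+η}`, with `P` realizing the metric
projection on `L_t`, mapping `L_t` onto `L_{t+η}`, and `Q` inverting `P`. -/
theorem projection_is_diffeomorphism {d : ℕ} (f : EuclideanSpace ℝ (Fin d) → ℝ)
    (hf : ContDiff ℝ 2 f) (hf_nonneg : ∀ x, 0 ≤ f x) (hf_int : ∫ x, f x = 1)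
    (t : ℝ) (ht : 0 < t) (ht_max : ∃ z, t < f z)
    (hne : {x : EuclideanSpace ℝ (Fin d) | f x = t}.Nonempty)
    (hcomp : IsCompact {x : EuclideanSpace ℝ (Fin d) | f x = t})
    (hreg : ∀ x, f x = t → gradient f x ≠ 0) :
    ∃ η₀ > 0, ∀ η : ℝ, 0 < η → η < η₀ →
      (∀ x ∈ {x : EuclideanSpace ℝ (Fin d) | f x = t},
        ∃! y, y ∈ {z : EuclideanSpace ℝ (Fin d) | f z = t + η} ∧
          dist x y = Metric.infDist x {z : EuclideanSpace ℝ (Fin d) | f z = t + η}) ∧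
      ∃ (U V : Set (EuclideanSpace ℝ (Fin d)))
        (P Q : EuclideanSpace ℝ (Fin d) → EuclideanSpace ℝ (Fin d)),
        IsOpen U ∧ IsOpen V ∧
        {x : EuclideanSpace ℝ (Fin d) | f x = t} ⊆ U ∧
        {z : EuclideanSpace ℝ (Fin d) | f z = t + η} ⊆ V ∧
        ContDiffOn ℝ 1 P U ∧ ContDiffOn ℝ 1 Q V ∧
        (∀ x, f x = t → P x ∈ {z : EuclideanSpace ℝ (Fin d) | f z = t + η} ∧
          dist x (P x) = Metric.infDist x {z : EuclideanSpace ℝ (Fin d) | f z = t + η}) ∧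
        P '' {x : EuclideanSpace ℝ (Fin d) | f x = t}
          = {z : EuclideanSpace ℝ (Fin d) | f z = t + η} ∧
        (∀ x, f x = t → Q (P x) = x) ∧
        (∀ z, f z = t + η → P (Q z) = z) := by
  classical
  have hint : Integrable f (volume : Measure (EuclideanSpace ℝ (Fin d))) := by
    by_contra h
    rw [integral_undef h] at hf_int
    exact zero_ne_one hf_int
  have hfc : Continuous f := hf.continuous
  have hsup := aux_compact f hfc hint t ht hcomp
  have hg1 : ContDiff ℝ 1 (gradient f) := aux_grad f hf
  have hf1 : ContDiff ℝ 1 f := hf.of_le (by norm_num)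
  set L : Set (EuclideanSpace ℝ (Fin d)) := {x | f x = t} with hL
  set g : (EuclideanSpace ℝ (Fin d)) → (EuclideanSpace ℝ (Fin d)) := gradient f with hg
  set F : (EuclideanSpace ℝ (Fin d)) × ℝ → (EuclideanSpace ℝ (Fin d)) × ℝ := fun p => (p.1 - p.2 • g p.1, f p.1) with hF
  set G : (EuclideanSpace ℝ (Fin d)) × ℝ → (EuclideanSpace ℝ (Fin d)) × ℝ := fun p => (p.1, f (p.1 - p.2 • g p.1)) with hG
  have hstep : ContDiff ℝ 1 (fun p : (EuclideanSpace ℝ (Fin d)) × ℝ => p.1 - p.2 • g p.1) :=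
    contDiff_fst.sub (contDiff_snd.smul (hg1.comp contDiff_fst))
  have hFc : ContDiff ℝ 1 F := hstep.prodMk (hf1.comp contDiff_fst)
  have hGc : ContDiff ℝ 1 G := contDiff_fst.prodMk (hf1.comp hstep)
  set K : Set ((EuclideanSpace ℝ (Fin d)) × ℝ) := L ×ˢ {(0 : ℝ)} with hK
  have hKc : IsCompact K := hcomp.prod isCompact_singleton
  have hFK : InjOn F K := by
    rintro ⟨y, s⟩ ⟨_, hs⟩ ⟨y', s'⟩ ⟨_, hs'⟩ h
    obtain rfl : s = 0 := hs
    obtain rfl : s' = 0 := hs'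
    have := congrArg Prod.fst h
    simpa [hF] using this
  have hGK : InjOn G K := by
    rintro ⟨y, s⟩ ⟨_, hs⟩ ⟨y', s'⟩ ⟨_, hs'⟩ h
    obtain rfl : s = 0 := hs
    obtain rfl : s' = 0 := hs'
    have := congrArg Prod.fst h
    simpa [hG] using this
  obtain ⟨W₁, hW₁o, hKW₁, hW₁i, hW₁d⟩ := aux_nhd F hFc K hKc hFK (by
    rintro ⟨y, s⟩ ⟨hy, hs⟩ v hv
    obtain rfl : s = 0 := hs
    exact aux_F f hf y (hreg y hy) v hv)
  obtain ⟨W₂, hW₂o, hKW₂, hW₂i, hW₂d⟩ := aux_nhd G hGc K hKc hGK (by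
    rintro ⟨y, s⟩ ⟨hy, hs⟩ v hv
    obtain rfl : s = 0 := hs
    exact aux_G f hf y (hreg y hy) v hv)
  set W := W₁ ∩ W₂ with hW
  have hWo : IsOpen W := hW₁o.inter hW₂o
  have hKW : K ⊆ W := subset_inter hKW₁ hKW₂
  have hFi : InjOn F W := hW₁i.mono inter_subset_left
  have hGi : InjOn G W := hW₂i.mono inter_subset_right
  have hFd : ∀ p ∈ W, ∃ e : ((EuclideanSpace ℝ (Fin d)) × ℝ) ≃L[ℝ] ((EuclideanSpace ℝ (Fin d)) × ℝ),
      HasStrictFDerivAt F (e : ((EuclideanSpace ℝ (Fin d)) × ℝ) →L[ℝ] ((EuclideanSpace ℝ (Fin d)) × ℝ)) p := fun p hp => hW₁d p hp.1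
  have hGd : ∀ p ∈ W, ∃ e : ((EuclideanSpace ℝ (Fin d)) × ℝ) ≃L[ℝ] ((EuclideanSpace ℝ (Fin d)) × ℝ),
      HasStrictFDerivAt G (e : ((EuclideanSpace ℝ (Fin d)) × ℝ) →L[ℝ] ((EuclideanSpace ℝ (Fin d)) × ℝ)) p := fun p hp => hW₂d p hp.2
  have hFinv := aux_inv F hFc W hWo hFi hFd
  have hGinv := aux_inv G hGc W hWo hGi hGd
  have hFWo := aux_open F W hWo hFd
  have hGWo := aux_open G W hWo hGd
  -- lower bound of the gradient
  obtain ⟨m, hm, hmL⟩ : ∃ m > 0, ∀ y ∈ L, m < ‖g y‖ := by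
    obtain ⟨y₀, hy₀, hmin⟩ := hcomp.exists_isMinOn hne hg1.continuous.norm.continuousOn
    have : 0 < ‖g y₀‖ := norm_pos_iff.2 (hreg y₀ hy₀)
    refine ⟨‖g y₀‖ / 2, by positivity, fun y hy => ?_⟩
    have h2 : ‖g y₀‖ ≤ ‖g y‖ := hmin hy
    linarith
  obtain ⟨δ, hδ, hδL⟩ := hcomp.exists_thickening_subset_open
    (isOpen_lt continuous_const hg1.continuous.norm : IsOpen {y | m < ‖g y‖}) hmL
  obtain ⟨ε, hε, hεK⟩ := hKc.exists_thickening_subset_open hWo hKW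
  set ρ := min δ (min ε (m * ε)) with hρ
  have hρ0 : 0 < ρ := by positivity
  have hnear : ∀ x ∈ L, ∀ y, dist x y < ρ → m < ‖g y‖ ∧
      (∀ s : ℝ, y - s • g y = x → (y, s) ∈ W) := by
    intro x hx y hxy
    have h1 : dist x y < δ := hxy.trans_le (min_le_left _ _)
    have h2 : dist x y < ε := hxy.trans_le ((min_le_right _ _).trans (min_le_left _ _))
    have h3 : dist x y < m * ε := hxy.trans_le ((min_le_right _ _).trans (min_le_right _ _))
    have hmy : m < ‖g y‖ := hδL (mem_thickening_iff.2 ⟨x, hx, by rwa [dist_comm]⟩)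
    refine ⟨hmy, fun s hs => hεK (mem_thickening_iff.2 ⟨(x, 0), ⟨hx, rfl⟩, ?_⟩)⟩
    rw [Prod.dist_eq]
    refine max_lt (by rwa [dist_comm]) ?_
    show dist s 0 < ε
    rw [Real.dist_eq, sub_zero]
    have h4 : dist x y = |s| * ‖g y‖ := by
      rw [dist_comm, dist_eq_norm, ← hs, sub_sub_cancel, norm_smul, Real.norm_eq_abs]
    rw [h4] at h3
    by_contra! hc
    have : m * ε ≤ ‖g y‖ * |s| := mul_le_mul hmy.le hc hε.le (norm_nonneg _)
    linarith
  -- the smaller neighborhood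
  set W' : Set ((EuclideanSpace ℝ (Fin d)) × ℝ) := W ∩ {p | dist (p.1 - p.2 • g p.1) p.1 < ρ} with hW'
  have hW'o : IsOpen W' :=
    hWo.inter (isOpen_lt (hstep.continuous.dist continuous_fst) continuous_const)
  have hFW'o := aux_open F W' hW'o (fun p hp => hFd p hp.1)
  obtain ⟨u, v, huo, hvo, hLu, htv, huv⟩ := generalized_tube_lemma hcomp
    (isCompact_singleton (x := t)) hFW'o (by
      rintro ⟨x, c⟩ ⟨hx, hc⟩
      obtain rfl : c = t := hc
      refine ⟨(x, 0), ⟨hKW ⟨hx, rfl⟩, ?_⟩, ?_⟩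
      · show dist (x - (0:ℝ) • g x) x < ρ
        simpa using hρ0
      · have hx' : f x = c := hx
        simp [hF, hx'])
  obtain ⟨η₁, hη₁, hball⟩ := Metric.isOpen_iff.1 hvo t (htv rfl)
  -- level sets approach
  set O : Set (EuclideanSpace ℝ (Fin d)) := {z | (z, t) ∈ G '' W} with hO
  have hOo : IsOpen O := hGWo.preimage (by fun_prop : Continuous fun z : (EuclideanSpace ℝ (Fin d)) => (z, t))
  have hLO : L ⊆ O := by
    intro x hx
    refine ⟨(x, 0), hKW ⟨hx, rfl⟩, ?_⟩
    have hx' : f x = t := hx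
    simp [hG, hx']
  obtain ⟨η₂, hη₂, hlev⟩ : ∃ η₂ > 0, ∀ η, 0 < η → η < η₂ → ∀ z, f z = t + η → z ∈ O := by
    have hC : IsCompact ({x | t ≤ f x} \ O) := hsup.diff hOo
    rcases ({x | t ≤ f x} \ O).eq_empty_or_nonempty with he | hn
    · refine ⟨1, one_pos, fun η h0 _ z hz => ?_⟩
      by_contra hzO
      have : z ∈ ({x | t ≤ f x} \ O) := ⟨by show t ≤ f z; linarith, hzO⟩
      rw [he] at this
      exact this
    · obtain ⟨z₀, hz₀, hmin⟩ := hC.exists_isMinOn hn hfc.continuousOn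
      have hlt : t < f z₀ := by
        refine lt_of_le_of_ne hz₀.1 fun h => hz₀.2 (hLO h.symm)
      refine ⟨f z₀ - t, by linarith, fun η h0 h1 z hz => ?_⟩
      by_contra hzO
      have : f z₀ ≤ f z := hmin ⟨by show t ≤ f z; linarith, hzO⟩
      linarith
  refine ⟨min η₁ η₂, lt_min hη₁ hη₂, fun η h0 hη => ?_⟩
  have hηa : η < η₁ := hη.trans_le (min_le_left _ _)
  have hηb : η < η₂ := hη.trans_le (min_le_right _ _)
  set M : Set (EuclideanSpace ℝ (Fin d)) := {z | f z = t + η} with hM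
  have hMO : ∀ z ∈ M, z ∈ O := fun z hz => hlev η h0 hηb z hz
  have hMcl : IsClosed M := isClosed_eq hfc continuous_const
  have hex : ∀ x ∈ L, ∃ p ∈ W', F p = (x, t + η) := by
    intro x hx
    refine huv ⟨hLu hx, hball ?_⟩
    rw [Metric.mem_ball, Real.dist_eq]
    rw [show t + η - t = η by ring, abs_of_pos h0]
    exact hηa
  have hexW : ∀ x ∈ L, ∃ p ∈ W, F p = (x, t + η) := fun x hx => by
    obtain ⟨p, hp, h⟩ := hex x hx
    exact ⟨p, hp.1, h⟩
  set P : (EuclideanSpace ℝ (Fin d)) → (EuclideanSpace ℝ (Fin d)) := fun x => (Function.invFunOn F W (x, t + η)).1 with hP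
  set Q : (EuclideanSpace ℝ (Fin d)) → (EuclideanSpace ℝ (Fin d)) := fun z => (Function.invFunOn G W (z, t)).1 -
    (Function.invFunOn G W (z, t)).2 • g (Function.invFunOn G W (z, t)).1 with hQ
  have hFeq : ∀ p ∈ W, ∀ q, F p = q → Function.invFunOn F W q = p := by
    rintro p hp _ rfl
    exact hFi (Function.invFunOn_mem ⟨p, hp, rfl⟩) hp (Function.invFunOn_eq ⟨p, hp, rfl⟩)
  have hGeq : ∀ p ∈ W, ∀ q, G p = q → Function.invFunOn G W q = p := by
    rintro p hp _ rfl
    exact hGi (Function.invFunOn_mem ⟨p, hp, rfl⟩) hp (Function.invFunOn_eq ⟨p, hp, rfl⟩)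
  -- nearest points are given by `P`
  have hnearest : ∀ x ∈ L, ∀ y ∈ M, dist x y = infDist x M → y = P x := by
    intro x hx y hy hd
    obtain ⟨p, hp, hFp⟩ := hex x hx
    have hp1 : p.1 - p.2 • g p.1 = x := congrArg Prod.fst hFp
    have hp2 : f p.1 = t + η := congrArg Prod.snd hFp
    have hmin : ∀ z, f z = f y → dist x y ≤ dist x z := by
      intro z hz
      rw [hd]
      exact infDist_le_dist_of_mem (show f z = t + η from hz.trans hy)
    have hdist : dist x y < ρ := by
      refine (hmin p.1 (hp2.trans (Eq.symm hy))).trans_lt ?_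
      have := hp.2
      rwa [mem_ofPred_eq, hp1] at this
    obtain ⟨hgy, hmem⟩ := hnear x hx y hdist
    obtain ⟨s, hs⟩ := aux_lagrange f hf x y (norm_pos_iff.1 (hm.trans hgy)) hmin
    have hW2 := hmem s hs
    have hy' : f y = t + η := hy
    have := hFeq (y, s) hW2 (x, t + η) (by
      show (y - s • g y, f y) = _
      rw [hy']; exact congrArg (fun w => (w, t + η)) hs)
    show y = (Function.invFunOn F W (x, t + η)).1
    rw [this]
  have hMne : M.Nonempty := by
    obtain ⟨x, hx⟩ := hne
    obtain ⟨p, _, hFp⟩ := hex x hx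
    exact ⟨p.1, congrArg Prod.snd hFp⟩
  have hPspec : ∀ x ∈ L, P x ∈ M ∧ dist x (P x) = infDist x M := by
    intro x hx
    obtain ⟨y, hy, hd⟩ := hMcl.exists_infDist_eq_dist hMne x
    have := hnearest x hx y hy hd.symm
    rw [← this]
    exact ⟨hy, hd.symm⟩
  have hQspec : ∀ z ∈ M, f (Q z) = t ∧ P (Q z) = z := by
    intro z hz
    obtain ⟨⟨y, s⟩, hp, hGp⟩ := hMO z hz
    have e1 : y = z := congrArg Prod.fst hGp
    subst e1
    have e2 : f (y - s • g y) = t := congrArg Prod.snd hGp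
    have hQy : Q y = y - s • g y := by
      simp only [hQ, hGeq _ hp _ hGp]
    have hy' : f y = t + η := hz
    refine ⟨by rw [hQy]; exact e2, ?_⟩
    rw [hQy]
    have := hFeq _ hp (y - s • g y, t + η) (by
      show (y - s • g y, f y) = _
      rw [hy'])
    show (Function.invFunOn F W (y - s • g y, t + η)).1 = y
    rw [this]
  have hQP : ∀ x ∈ L, Q (P x) = x := by
    intro x hx
    obtain ⟨p, hp, hFp⟩ := hexW x hx
    have hp1 : p.1 - p.2 • g p.1 = x := congrArg Prod.fst hFp
    have hPx : P x = p.1 := by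
      simp only [hP, hFeq _ hp _ hFp]
    have hx' : f x = t := hx
    have := hGeq p hp (p.1, t) (by
      show (p.1, f (p.1 - p.2 • g p.1)) = _
      rw [hp1, hx'])
    rw [hPx]
    simp only [hQ, this]
    exact hp1
  refine ⟨fun x hx => ⟨P x, hPspec x hx, fun y hy => hnearest x hx y hy.1 hy.2⟩,
    {x | (x, t + η) ∈ F '' W}, O, P, Q, ?_, hOo, hexW, hMO, ?_, ?_, hPspec, ?_, hQP,
    fun z hz => (hQspec z hz).2⟩
  · exact hFWo.preimage (by fun_prop : Continuous fun z : (EuclideanSpace ℝ (Fin d)) => (z, t + η))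
  · refine contDiff_fst.comp_contDiffOn (hFinv.comp
      (contDiff_id.prodMk contDiff_const).contDiffOn ?_)
    intro x hx
    exact hx
  · refine hstep.comp_contDiffOn (hGinv.comp
      (contDiff_id.prodMk contDiff_const).contDiffOn ?_)
    intro x hx
    exact hx
  · apply Subset.antisymm
    · rintro _ ⟨x, hx, rfl⟩
      exact (hPspec x hx).1
    · intro z hz
      exact ⟨Q z, (hQspec z hz).1, (hQspec z hz).2⟩
end

section
/- Suppose f is twice continuously differentiable, t > 0, L_t is nonempty and compact, and there are no critical points of f on L_t (∇f(x) ≠ 0 for all x ∈ L_t). Then the level set L_t has positive reach. -/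
open Metric Set Filter Topology MeasureTheory

/-- consequence of Federer, Lem 4.11: If `f` is twice continuously
differentiable, `L_t` is nonempty and compact, and there are no critical points on `L_t`,
then `L_t` has positive reach: there is `r > 0` such that every point within distance `r`
of `L_t` has a unique nearest point in `L_t`. -/
theorem level_set_positive_reach {d : ℕ} (f : EuclideanSpace ℝ (Fin d) → ℝ)
    (hf : ContDiff ℝ 2 f) (hf_nonneg : ∀ x, 0 ≤ f x) (hf_int : ∫ x, f x = 1)
    (t : ℝ) (ht : 0 < t)
    (hne : {x : EuclideanSpace ℝ (Fin d) | f x = t}.Nonempty)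
    (hcomp : IsCompact {x : EuclideanSpace ℝ (Fin d) | f x = t})
    (hreg : ∀ x, f x = t → gradient f x ≠ 0) :
    ∃ r > 0, ∀ x : EuclideanSpace ℝ (Fin d),
      Metric.infDist x {z : EuclideanSpace ℝ (Fin d) | f z = t} < r →
        ∃! y, y ∈ {z : EuclideanSpace ℝ (Fin d) | f z = t} ∧
          dist x y = Metric.infDist x {z : EuclideanSpace ℝ (Fin d) | f z = t} := by
  set L : Set (EuclideanSpace ℝ (Fin d)) := {z | f z = t} with hL
  have hdiff : Differentiable ℝ f := hf.differentiable (by norm_num)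
  have hC1 : ContDiff ℝ 1 (fderiv ℝ f) := hf.fderiv_right (by norm_num)
  have hreg' : ∀ x ∈ L, fderiv ℝ f x ≠ 0 := by
    intro x hx h0
    apply hreg x hx
    simp [gradient, h0]
  -- lower bound on the derivative
  obtain ⟨m, hm, hmL⟩ : ∃ m > 0, ∀ x ∈ L, m ≤ ‖fderiv ℝ f x‖ := by
    obtain ⟨x0, hx0, hmin⟩ := hcomp.exists_isMinOn hne hC1.continuous.norm.continuousOn
    exact ⟨‖fderiv ℝ f x0‖, norm_pos_iff.2 (hreg' x0 hx0), fun x hx => hmin hx⟩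
  -- quadratic estimate
  obtain ⟨C, hC, hq⟩ : ∃ C ≥ 0, ∀ y ∈ L, ∀ z ∈ L,
      |fderiv ℝ f y (z - y)| ≤ C * ‖z - y‖ ^ 2 := by
    obtain ⟨R, hR⟩ := hcomp.isBounded.subset_closedBall 0
    have hcont : Continuous (fderiv ℝ (fderiv ℝ f)) := hC1.continuous_fderiv (by norm_num)
    obtain ⟨C, hC⟩ := (isCompact_closedBall (0 : EuclideanSpace ℝ (Fin d)) R).exists_bound_of_continuousOn
      (f := fderiv ℝ (fderiv ℝ f)) hcont.continuousOn
    have hC0 : 0 ≤ C := by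
      obtain ⟨y, hy⟩ := hne
      exact (norm_nonneg _).trans (hC y (hR hy))
    refine ⟨C, hC0, fun y hy z hz => ?_⟩
    have hcv := convex_closedBall (0 : EuclideanSpace ℝ (Fin d)) R
    have hseg := hcv.segment_subset (hR hy) (hR hz)
    have key := Convex.norm_image_sub_le_of_norm_hasFDerivWithin_le' (𝕜 := ℝ) (f := f)
      (f' := fderiv ℝ f) (s := segment ℝ y z) (φ := fderiv ℝ f y) (C := C * ‖z - y‖)
      (fun w _ => (hdiff w).hasFDerivAt.hasFDerivWithinAt)
      (fun w hw => by
        have h1 := hcv.norm_image_sub_le_of_norm_fderiv_le (𝕜 := ℝ) (f := fderiv ℝ f)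
          (fun u _ => (hC1.differentiable (by norm_num)) u) hC (hR hy) (hseg hw)
        refine h1.trans ?_
        gcongr
        obtain ⟨θ, hθ, rfl⟩ := (segment_eq_image' ℝ y z) ▸ hw
        simp only [add_sub_cancel_left, norm_smul, Real.norm_eq_abs, abs_of_nonneg hθ.1]
        exact mul_le_of_le_one_left (norm_nonneg _) hθ.2)
      (convex_segment y z) (left_mem_segment ℝ y z) (right_mem_segment ℝ y z)
    have hyz : f z - f y = 0 := by
      rw [show f z = t from hz, show f y = t from hy, sub_self]
    rw [hyz, zero_sub, norm_neg, Real.norm_eq_abs] at key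
    calc _ ≤ _ := key
      _ = _ := by ring
  refine ⟨m / (2 * (C + 1)), by positivity, fun x hx => ?_⟩
  obtain ⟨y, hy, hxy⟩ := hcomp.exists_infDist_eq_dist hne x
  refine ⟨y, ⟨hy, hxy.symm⟩, ?_⟩
  rintro z ⟨hz, hxz⟩
  have hmin : IsMinOn (fun w => ‖w - x‖ ^ 2) L y := by
    intro w hw
    have : dist x y ≤ dist x w := hxy ▸ Metric.infDist_le_dist_of_mem hw
    simp only [mem_ofPred_eq]
    rw [← dist_eq_norm, ← dist_eq_norm, dist_comm y, dist_comm w]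
    gcongr
  have hLy : L = {w | f w = f y} := by rw [show f y = t from hy]
  have hφ : HasStrictFDerivAt (fun w : EuclideanSpace ℝ (Fin d) => ‖w - x‖ ^ 2)
      (2 • (innerSL ℝ (y - x)).comp (ContinuousLinearMap.id ℝ _)) y :=
    (hasStrictFDerivAt_norm_sq (y - x)).comp y ((hasStrictFDerivAt_id y).sub_const x)
  have hext : IsLocalExtrOn (fun w => ‖w - x‖ ^ 2) {w | f w = f y} y :=
    Or.inl (hLy ▸ hmin.localize)
  obtain ⟨a, b, hab, h0⟩ := hext.exists_multipliers_of_hasStrictFDerivAt_1d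
    (hf.contDiffAt.hasStrictFDerivAt (by norm_num)) hφ
  rw [ContinuousLinearMap.comp_id] at h0
  have hb : b ≠ 0 := by
    rintro rfl
    have ha : a ≠ 0 := by
      rintro rfl
      exact hab rfl
    rw [zero_smul, add_zero] at h0
    exact hreg' y hy ((smul_eq_zero.1 h0).resolve_left ha)
  obtain ⟨c, hc⟩ : ∃ c : ℝ, innerSL ℝ (y - x) = c • fderiv ℝ f y := by
    refine ⟨-a / (2 * b), ?_⟩
    ext v
    have := DFunLike.congr_fun h0 v
    simp at this
    simp
    field_simp
    linarith
  set ρ := Metric.infDist x L with hρ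
  have hnorm : ρ = |c| * ‖fderiv ℝ f y‖ := by
    have := congrArg norm hc
    rw [innerSL_apply_norm, norm_smul, Real.norm_eq_abs, ← dist_eq_norm, dist_comm, ← hxy] at this
    exact this
  have hin : inner ℝ (y - x) (z - y) = c * fderiv ℝ f y (z - y) := by
    have := DFunLike.congr_fun hc (z - y)
    exact this
  have hsq : ‖z - y‖ ^ 2 = -2 * inner ℝ (y - x) (z - y) := by
    have h1 := norm_add_sq_real (y - x) (z - y)
    have h2 : ‖y - x + (z - y)‖ = ‖y - x‖ := by
      rw [show y - x + (z - y) = z - x by abel, ← dist_eq_norm, ← dist_eq_norm,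
        dist_comm z, dist_comm y, hxz, hxy]
    rw [h2] at h1
    linarith
  have h3 : ‖z - y‖ ^ 2 ≤ 2 * |c| * (C * ‖z - y‖ ^ 2) := by
    calc ‖z - y‖ ^ 2 ≤ |‖z - y‖ ^ 2| := le_abs_self _
      _ = 2 * |c| * |fderiv ℝ f y (z - y)| := by
        rw [hsq, hin, abs_mul, abs_mul]; norm_num; ring
      _ ≤ _ := by
        gcongr
        exact hq y hy z hz
  have h4 : |c| * m ≤ ρ := by
    rw [hnorm]
    gcongr
    exact hmL y hy
  have h5 : |c| * (2 * (C + 1)) < 1 := by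
    rw [lt_div_iff₀ (by positivity)] at hx
    have : m * (|c| * (2 * (C + 1))) < m * 1 := by
      have : |c| * m * (2 * (C + 1)) ≤ ρ * (2 * (C + 1)) := by gcongr
      linarith
    exact lt_of_mul_lt_mul_left this hm.le
  by_contra hne'
  have hpos : 0 < ‖z - y‖ ^ 2 := by
    have := norm_pos_iff.2 (sub_ne_zero.2 hne')
    positivity
  have := abs_nonneg c
  nlinarith
end

section
/- Let y ∈ ℝ^d with ∇f(y) ≠ 0 and let r > 0 be such that inf_{z ∈ B(y,r)} ‖∇f(z)‖ > 0. Define π_y(r) := (inf_{z ∈ B(y,r)} ‖∇f(z)‖) / (sup_{z ∈ B(y,2r)} ‖∇²f(z)‖). Then the reach of the level set L_{f(y)} at the point y is at least min{r/2, π_y(r)}. -/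
open Metric Set Filter Topology MeasureTheory

/-- Gradient of a `C²` function is `C¹`. -/
lemma prb_grad_contDiff {d : ℕ} (f : EuclideanSpace ℝ (Fin d) → ℝ)
    (hf : ContDiff ℝ 2 f) : ContDiff ℝ 1 (gradient f) := by
  have h : ContDiff ℝ 1 (fderiv ℝ f) := hf.fderiv_right (by norm_num)
  exact (InnerProductSpace.toDual ℝ (EuclideanSpace ℝ (Fin d))).symm.contDiff.comp h

/-- Lagrange multiplier at a nearest point. -/
lemma prb_lagrange {d : ℕ} (f : EuclideanSpace ℝ (Fin d) → ℝ)
    (hf : ContDiff ℝ 2 f) (c : ℝ) (x p : EuclideanSpace ℝ (Fin d)) (hp : f p = c)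
    (hg : gradient f p ≠ 0)
    (hmin : dist x p = Metric.infDist x {z : EuclideanSpace ℝ (Fin d) | f z = c}) :
    ∃ l : ℝ, x - p = l • gradient f p := by
  have hstrict : HasStrictFDerivAt f (fderiv ℝ f p) p :=
    hf.contDiffAt.hasStrictFDerivAt (by norm_num)
  have hsq : HasStrictFDerivAt (fun z => ‖z - x‖ ^ 2)
      ((2 • (innerSL ℝ (p - x))).comp
        (ContinuousLinearMap.id ℝ (EuclideanSpace ℝ (Fin d)))) p :=
    (hasStrictFDerivAt_norm_sq (p - x)).comp p ((hasStrictFDerivAt_id p).sub_const x)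
  have hext : IsLocalExtrOn (fun z => ‖z - x‖ ^ 2) {z | f z = f p} p := by
    left
    refine (eventually_mem_nhdsWithin).mono ?_
    intro z hz
    have h1 : dist x p ≤ dist x z := by
      rw [hmin]
      exact Metric.infDist_le_dist_of_mem (by rw [mem_ofPred_eq, ← hp]; exact hz)
    rw [dist_comm x p, dist_comm x z, dist_eq_norm, dist_eq_norm] at h1
    exact pow_le_pow_left₀ (norm_nonneg _) h1 2
  obtain ⟨a, b, hab, h⟩ := hext.exists_multipliers_of_hasStrictFDerivAt_1d hstrict hsq
  have key : a • gradient f p + (2 * b) • (p - x) = 0 := by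
    refine ext_inner_right ℝ fun v => ?_
    have hv := DFunLike.congr_fun h v
    have hgv : inner ℝ (gradient f p) v = fderiv ℝ f p v := by
      simp [gradient]
    simp only [_root_.add_apply, _root_.smul_apply, smul_eq_mul,
      ContinuousLinearMap.comp_apply, ContinuousLinearMap.id_apply, innerSL_apply_apply,
      _root_.zero_apply, nsmul_eq_mul, Nat.cast_ofNat] at hv
    rw [inner_add_left, real_inner_smul_left, real_inner_smul_left, hgv, inner_zero_left]
    linarith
  have hb : b ≠ 0 := by
    rintro rfl
    have : a ≠ 0 := by
      rintro rfl
      exact hab rfl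
    simp [this, hg] at key
  refine ⟨a / (2 * b), ?_⟩
  have h2 : a • gradient f p = (2 * b) • (x - p) := by
    rw [← sub_eq_zero, ← key, ← neg_sub p x, smul_neg, sub_neg_eq_add]
  rw [div_eq_inv_mul, mul_smul, h2, smul_smul, inv_mul_cancel₀ (by simpa using hb), one_smul]

theorem pointwise_reach_bound {d : ℕ} (f : EuclideanSpace ℝ (Fin d) → ℝ)
    (hf : ContDiff ℝ 2 f) (hf_nonneg : ∀ x, 0 ≤ f x) (hf_int : ∫ x, f x = 1)
    (y : EuclideanSpace ℝ (Fin d)) (hy : gradient f y ≠ 0)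
    (r : ℝ) (hr : 0 < r)
    (hinf : 0 < sInf ((fun z => ‖gradient f z‖) '' Metric.ball y r)) :
    ∀ x ∈ Metric.ball y
      (min (r / 2)
        (sInf ((fun z => ‖gradient f z‖) '' Metric.ball y r) /
          sSup ((fun z => ‖fderiv ℝ (gradient f) z‖) '' Metric.ball y (2 * r)))),
      ∃! p, p ∈ {z : EuclideanSpace ℝ (Fin d) | f z = f y} ∧
        dist x p = Metric.infDist x {z : EuclideanSpace ℝ (Fin d) | f z = f y} := by
  intro x hx
  set L : Set (EuclideanSpace ℝ (Fin d)) := {z | f z = f y} with hL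
  set m := sInf ((fun z => ‖gradient f z‖) '' Metric.ball y r) with hm
  set M := sSup ((fun z => ‖fderiv ℝ (gradient f) z‖) '' Metric.ball y (2 * r)) with hM
  have hG := prb_grad_contDiff f hf
  have hGd : Differentiable ℝ (gradient f) := hG.differentiable (by norm_num)
  have hxr : dist x y < r / 2 := lt_of_lt_of_le hx (min_le_left _ _)
  have hxm : dist x y < m / M := lt_of_lt_of_le hx (min_le_right _ _)
  have hM0 : 0 < M := by
    by_contra hneg
    have := div_nonpos_of_nonneg_of_nonpos hinf.le (not_lt.mp hneg)
    have := dist_nonneg (x := x) (y := y)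
    linarith
  have hbdd : BddAbove ((fun z => ‖fderiv ℝ (gradient f) z‖) '' Metric.ball y (2 * r)) := by
    have hc : Continuous (fun z => ‖fderiv ℝ (gradient f) z‖) :=
      (hG.continuous_fderiv (by norm_num)).norm
    exact ((isCompact_closedBall y (2 * r)).bddAbove_image hc.continuousOn).mono
      (image_mono ball_subset_closedBall)
  have hMb : ∀ z ∈ ball y r, ‖fderiv ℝ (gradient f) z‖ ≤ M := fun z hz =>
    le_csSup hbdd ⟨z, ball_subset_ball (by linarith) hz, rfl⟩
  have hmb : ∀ z ∈ ball y r, m ≤ ‖gradient f z‖ := fun z hz =>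
    csInf_le ⟨0, by rintro _ ⟨w, _, rfl⟩; exact norm_nonneg _⟩ ⟨z, hz, rfl⟩
  have hLc : IsClosed L := isClosed_eq hf.continuous continuous_const
  have hyL : y ∈ L := rfl
  obtain ⟨p, hpL, hp⟩ := hLc.exists_infDist_eq_dist ⟨y, hyL⟩ x
  refine ⟨p, ⟨hpL, hp.symm⟩, ?_⟩
  rintro q ⟨hqL, hq⟩
  have hball : ∀ z, dist x z = infDist x L → z ∈ ball y r := by
    intro z hz
    have h1 : infDist x L ≤ dist x y := infDist_le_dist_of_mem hyL
    have h2 := dist_triangle z x y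
    rw [dist_comm z x] at h2
    rw [mem_ball]
    linarith
  have hpb := hball p hp.symm
  have hqb := hball q hq
  have hgp : gradient f p ≠ 0 := by
    intro h
    have := hmb p hpb
    rw [h, norm_zero] at this
    linarith
  obtain ⟨l, hl⟩ := prb_lagrange f hf (f y) x p hpL hgp hp.symm
  have hlM : |l| * M < 1 := by
    have h1 : |l| * ‖gradient f p‖ = dist x p := by
      rw [dist_eq_norm, hl, norm_smul, Real.norm_eq_abs]
    have h2 : dist x p ≤ dist x y := hp ▸ infDist_le_dist_of_mem hyL
    have h3 : dist x y * M < m := (lt_div_iff₀ hM0).mp hxm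
    have h4 := mul_le_mul_of_nonneg_left (hmb p hpb) (abs_nonneg l)
    have h5 : (|l| * M) * m < 1 * m := by nlinarith
    exact lt_of_mul_lt_mul_right h5 hinf.le
  by_contra hne
  set v := q - p with hv
  have hv0 : 0 < ‖v‖ := norm_pos_iff.mpr (sub_ne_zero.mpr hne)
  have hline : ∀ t : ℝ, HasDerivAt (fun t : ℝ => p + t • v) v t := fun t => by
    simpa using ((hasDerivAt_id t).smul_const v).const_add p
  have hder : ∀ t : ℝ, HasDerivAt
      (fun t : ℝ => ‖p + t • v - x‖ ^ 2 + (2 * l) * f (p + t • v))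
      (2 * inner ℝ (p + t • v - x) v + (2 * l) * inner ℝ (gradient f (p + t • v)) v) t := by
    intro t
    have h1 := ((hline t).sub_const x).norm_sq
    have h2 : HasDerivAt (fun t : ℝ => f (p + t • v))
        (inner ℝ (gradient f (p + t • v)) v) t := by
      have h3 : HasFDerivAt f (fderiv ℝ f (p + t • v)) (p + t • v) :=
        (hf.differentiable (by norm_num) _).hasFDerivAt
      have h4 : inner ℝ (gradient f (p + t • v)) v = fderiv ℝ f (p + t • v) v := by
        simp [gradient]
      rw [h4]
      exact h3.comp_hasDerivAt t (hline t)
    exact h1.add (h2.const_mul (2 * l))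
  obtain ⟨t, ht, h0⟩ := exists_hasDerivAt_eq_zero (zero_lt_one (α := ℝ))
    (fun t _ => (hder t).continuousAt.continuousWithinAt) (by
      have e : p + (1 : ℝ) • v = q := by rw [one_smul, hv]; abel
      have e2 : ‖p - x‖ = ‖q - x‖ := by
        rw [← dist_eq_norm, ← dist_eq_norm, dist_comm p x, dist_comm q x, hq, hp]
      have e3 : f p = f q := by
        have a1 : f p = f y := hpL
        have a2 : f q = f y := hqL
        rw [a1, a2]
      simp only [e, zero_smul, add_zero, e2, e3]) (fun t _ => hder t)
  have hzb : p + t • v ∈ ball y r :=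
    (convex_ball y r).add_smul_sub_mem hpb hqb ⟨ht.1.le, ht.2.le⟩
  have hlip : ‖gradient f (p + t • v) - gradient f p‖ ≤ M * ‖p + t • v - p‖ :=
    (convex_ball y r).norm_image_sub_le_of_norm_fderiv_le (fun z _ => hGd z) hMb hpb hzb
  rw [add_sub_cancel_left, norm_smul, Real.norm_eq_abs, abs_of_pos ht.1] at hlip
  have hE : p + t • v - x + l • gradient f (p + t • v)
      = t • v + l • (gradient f (p + t • v) - gradient f p) := by
    rw [smul_sub l, ← hl]; abel
  have h0' : inner ℝ (p + t • v - x + l • gradient f (p + t • v)) v = 0 := by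
    rw [inner_add_left, real_inner_smul_left]; linarith
  rw [hE, inner_add_left, real_inner_smul_left, real_inner_smul_left,
    real_inner_self_eq_norm_sq] at h0'
  have h6 : |l * inner ℝ (gradient f (p + t • v) - gradient f p) v|
      ≤ |l| * ((M * (t * ‖v‖)) * ‖v‖) := by
    rw [abs_mul]
    refine mul_le_mul_of_nonneg_left ?_ (abs_nonneg l)
    exact (abs_real_inner_le_norm _ _).trans
      (mul_le_mul_of_nonneg_right hlip (norm_nonneg v))
  have h7 := neg_abs_le (l * inner ℝ (gradient f (p + t • v) - gradient f p) v)
  have h8 : 0 < t * ‖v‖ ^ 2 := mul_pos ht.1 (pow_pos hv0 2)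
  have h9 : 0 < (1 - |l| * M) * (t * ‖v‖ ^ 2) := mul_pos (by linarith) h8
  nlinarith
end

section
/- Let 0 < t < s < max f and suppose ∇f(y) ≠ 0 for every y with f(y) ∈ [t, s]. Define ψ(x) := ζ_x(s − t) for x ∈ L_t and ψ↓(z) := ζ↓_z(s − t) for z ∈ L_s, where ζ↓ is the reversed (gradient descent) flow. Then ψ↓(z) ∈ L_t for every z ∈ L_s, and the descent flow inverts the ascent flow: ψ↓(ψ(x)) = x for all x ∈ L_t and ψ(ψ↓(z)) = z for all z ∈ L_s. -/
open Metric Set Filter Topology MeasureTheory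
open scoped Classical

/-- The normalized gradient ascent vector field `∇f/‖∇f‖²` (extended by `0` at critical
points) driving the ascent flow `ζ`. -/
noncomputable def ascentField {d : ℕ} (f : EuclideanSpace ℝ (Fin d) → ℝ)
    (y : EuclideanSpace ℝ (Fin d)) : EuclideanSpace ℝ (Fin d) :=
  if gradient f y = 0 then 0 else (‖gradient f y‖ ^ 2)⁻¹ • gradient f y

/-- The normalized gradient descent vector field `−∇f/‖∇f‖²` (extended by `0` at critical
points) driving the descent flow `ζ↓`. -/
noncomputable def descentField {d : ℕ} (f : EuclideanSpace ℝ (Fin d) → ℝ)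
    (y : EuclideanSpace ℝ (Fin d)) : EuclideanSpace ℝ (Fin d) :=
  if gradient f y = 0 then 0 else -((‖gradient f y‖ ^ 2)⁻¹ • gradient f y)

lemma descentField_eq_neg {d : ℕ} (f : EuclideanSpace ℝ (Fin d) → ℝ)
    (y : EuclideanSpace ℝ (Fin d)) : descentField f y = -ascentField f y := by
  unfold descentField ascentField
  split_ifs <;> simp

lemma gradient_neg_fun {d : ℕ} (f : EuclideanSpace ℝ (Fin d) → ℝ)
    (y : EuclideanSpace ℝ (Fin d)) : gradient (fun x => -f x) y = -gradient f y := by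
  unfold gradient
  rw [fderiv_fun_neg, map_neg]

lemma ascentField_neg_fun {d : ℕ} (f : EuclideanSpace ℝ (Fin d) → ℝ)
    (y : EuclideanSpace ℝ (Fin d)) : ascentField (fun x => -f x) y = descentField f y := by
  unfold descentField ascentField
  rw [gradient_neg_fun]
  simp

/-- Along the ascent flow the level grows at unit speed. -/
lemma level_ascent {d : ℕ} (f : EuclideanSpace ℝ (Fin d) → ℝ)
    (hf : ContDiff ℝ 2 f) (t s : ℝ)
    (hreg : ∀ y, f y ∈ Icc t s → gradient f y ≠ 0)
    (γ : ℝ → EuclideanSpace ℝ (Fin d)) (h0 : f (γ 0) = t)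
    (hγ : ∀ τ ∈ Icc (0 : ℝ) (s - t), HasDerivAt γ (ascentField f (γ τ)) τ) :
    ∀ τ ∈ Icc (0 : ℝ) (s - t), f (γ τ) = t + τ := by
  have hdf : Differentiable ℝ f := hf.differentiable (by norm_num)
  have key : ∀ τ ∈ Icc (0 : ℝ) (s - t), HasDerivAt (fun τ => f (γ τ))
      (if gradient f (γ τ) = 0 then 0 else 1) τ := by
    intro τ hτ
    have h1 := (hdf (γ τ)).hasGradientAt.hasFDerivAt.comp_hasDerivAt τ (hγ τ hτ)
    refine h1.congr_deriv ?_
    unfold ascentField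
    split_ifs with hg
    · simp
    · have : ‖gradient f (γ τ)‖ ≠ 0 := norm_ne_zero_iff.2 hg
      rw [InnerProductSpace.toDual_apply_apply, real_inner_smul_right, real_inner_self_eq_norm_sq]
      field_simp
  have hcont : ContinuousOn (fun τ => f (γ τ)) (Icc (0 : ℝ) (s - t)) :=
    fun τ hτ => (key τ hτ).continuousAt.continuousWithinAt
  have hlow : MonotoneOn (fun τ => f (γ τ)) (Icc (0 : ℝ) (s - t)) := by
    refine monotoneOn_of_hasDerivWithinAt_nonneg (convex_Icc _ _) hcont
      (fun τ hτ => (key τ (interior_subset hτ)).hasDerivWithinAt) ?_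
    intro τ _
    split_ifs <;> norm_num
  have hup : MonotoneOn (fun τ => τ - f (γ τ)) (Icc (0 : ℝ) (s - t)) := by
    refine monotoneOn_of_hasDerivWithinAt_nonneg (convex_Icc _ _) (continuousOn_id.sub hcont)
      (fun τ hτ => ((hasDerivAt_id τ).sub (key τ (interior_subset hτ))).hasDerivWithinAt) ?_
    intro τ _
    split_ifs <;> norm_num
  have hmem : ∀ τ ∈ Icc (0 : ℝ) (s - t), f (γ τ) ∈ Icc t s := by
    intro τ hτ
    have h00 : (0 : ℝ) ∈ Icc (0 : ℝ) (s - t) := ⟨le_rfl, hτ.1.trans hτ.2⟩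
    have h1 := hlow h00 hτ hτ.1
    have h2 := hup h00 hτ hτ.1
    simp only [h0] at h1 h2
    constructor <;> linarith [hτ.2]
  have hlow' : MonotoneOn (fun τ => f (γ τ) - τ) (Icc (0 : ℝ) (s - t)) := by
    refine monotoneOn_of_hasDerivWithinAt_nonneg (convex_Icc _ _) (hcont.sub continuousOn_id)
      (fun τ hτ => ((key τ (interior_subset hτ)).sub (hasDerivAt_id τ)).hasDerivWithinAt) ?_
    intro τ hτ
    rw [if_neg (hreg _ (hmem τ (interior_subset hτ)))]
    norm_num
  intro τ hτ
  have h00 : (0 : ℝ) ∈ Icc (0 : ℝ) (s - t) := ⟨le_rfl, hτ.1.trans hτ.2⟩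
  have h1 := hlow' h00 hτ hτ.1
  have h2 := hup h00 hτ hτ.1
  simp only [h0] at h1 h2
  linarith

lemma ascentField_contDiffAt {d : ℕ} (f : EuclideanSpace ℝ (Fin d) → ℝ)
    (hf : ContDiff ℝ 2 f) (y : EuclideanSpace ℝ (Fin d)) (hy : gradient f y ≠ 0) :
    ContDiffAt ℝ 1 (ascentField f) y := by
  have hg : ContDiff ℝ 1 (gradient f) := by
    unfold gradient
    exact (InnerProductSpace.toDual ℝ (EuclideanSpace ℝ (Fin d))).symm.contDiff.comp
      (hf.fderiv_right (by norm_num))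
  have hEq : ascentField f = fun y => (‖gradient f y‖ ^ 2)⁻¹ • gradient f y := by
    funext z
    unfold ascentField
    split_ifs with h
    · simp [h]
    · rfl
  rw [hEq]
  refine ContDiffAt.smul (ContDiffAt.inv (hg.norm_sq ℝ).contDiffAt ?_) hg.contDiffAt
  simpa using hy

/-- Uniqueness for the ascent flow away from critical points. -/
lemma ascent_unique {d : ℕ} (f : EuclideanSpace ℝ (Fin d) → ℝ)
    (hf : ContDiff ℝ 2 f) (T : ℝ) (hT : 0 ≤ T)
    (a b : ℝ → EuclideanSpace ℝ (Fin d)) (h0 : a 0 = b 0)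
    (ha : ∀ τ ∈ Icc (0 : ℝ) T, HasDerivAt a (ascentField f (a τ)) τ)
    (hb : ∀ τ ∈ Icc (0 : ℝ) T, HasDerivAt b (ascentField f (b τ)) τ)
    (hna : ∀ τ ∈ Icc (0 : ℝ) T, gradient f (a τ) ≠ 0)
    (hnb : ∀ τ ∈ Icc (0 : ℝ) T, gradient f (b τ) ≠ 0) : a T = b T := by
  have hac : ContinuousOn a (Icc (0 : ℝ) T) :=
    fun τ hτ => (ha τ hτ).continuousAt.continuousWithinAt
  have hbc : ContinuousOn b (Icc (0 : ℝ) T) :=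
    fun τ hτ => (hb τ hτ).continuousAt.continuousWithinAt
  have hK : IsCompact (a '' Icc (0 : ℝ) T ∪ b '' Icc (0 : ℝ) T) :=
    (isCompact_Icc.image_of_continuousOn hac).union (isCompact_Icc.image_of_continuousOn hbc)
  have hL : LocallyLipschitzOn (a '' Icc (0 : ℝ) T ∪ b '' Icc (0 : ℝ) T) (ascentField f) := by
    intro y hy
    have hy' : gradient f y ≠ 0 := by
      rcases hy with ⟨τ, hτ, rfl⟩ | ⟨τ, hτ, rfl⟩
      · exact hna τ hτ
      · exact hnb τ hτ
    obtain ⟨K, u, hu, hLip⟩ := (ascentField_contDiffAt f hf y hy').exists_lipschitzOnWith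
    exact ⟨K, u, mem_nhdsWithin_of_mem_nhds hu, hLip⟩
  obtain ⟨K, hLip⟩ := hL.exists_lipschitzOnWith_of_compact hK
  exact ODE_solution_unique_of_mem_Icc_right (v := fun _ => ascentField f)
    (s := fun _ => a '' Icc (0 : ℝ) T ∪ b '' Icc (0 : ℝ) T)
    (fun _ _ => hLip) hac (fun τ hτ => (ha τ (Ico_subset_Icc_self hτ)).hasDerivWithinAt)
    (fun τ hτ => Or.inl ⟨τ, Ico_subset_Icc_self hτ, rfl⟩) hbc
    (fun τ hτ => (hb τ (Ico_subset_Icc_self hτ)).hasDerivWithinAt)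
    (fun τ hτ => Or.inr ⟨τ, Ico_subset_Icc_self hτ, rfl⟩) h0 ⟨hT, le_rfl⟩

/-- One-sided inversion, for an ascent curve `a` of `f` followed by an ascent curve `b` of `-f`. -/
lemma inverts_aux {d : ℕ} (f : EuclideanSpace ℝ (Fin d) → ℝ)
    (hf : ContDiff ℝ 2 f) (t s : ℝ) (hts : t < s)
    (hreg : ∀ y, f y ∈ Icc t s → gradient f y ≠ 0)
    (a b : ℝ → EuclideanSpace ℝ (Fin d)) (h0 : f (a 0) = t) (hab : b 0 = a (s - t))
    (ha : ∀ τ ∈ Icc (0 : ℝ) (s - t), HasDerivAt a (ascentField f (a τ)) τ)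
    (hb : ∀ τ ∈ Icc (0 : ℝ) (s - t), HasDerivAt b (descentField f (b τ)) τ) :
    b (s - t) = a 0 := by
  have hl := level_ascent f hf t s hreg a h0 ha
  have hT : (0 : ℝ) ≤ s - t := by linarith
  have hreg' : ∀ y, -f y ∈ Icc (-s) (-t) → gradient (fun x => -f x) y ≠ 0 := by
    intro y hy
    rw [gradient_neg_fun]
    exact neg_ne_zero.2 (hreg y ⟨by linarith [hy.2], by linarith [hy.1]⟩)
  have e : -t - -s = s - t := by ring
  have hb' : ∀ τ ∈ Icc (0 : ℝ) (s - t), HasDerivAt b (ascentField (fun x => -f x) (b τ)) τ := by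
    intro τ hτ
    rw [ascentField_neg_fun]
    exact hb τ hτ
  have hlb := level_ascent (fun x => -f x) hf.neg (-s) (-t) hreg' b
    (by simp only [hab, hl (s - t) ⟨hT, le_rfl⟩]; ring) (by rw [e]; exact hb')
  rw [e] at hlb
  have hrev : ∀ τ ∈ Icc (0 : ℝ) (s - t), s - t - τ ∈ Icc (0 : ℝ) (s - t) :=
    fun τ hτ => ⟨by linarith [hτ.2], by linarith [hτ.1]⟩
  have := ascent_unique (fun x => -f x) hf.neg (s - t) hT b (fun τ => a (s - t - τ))
    (by simpa using hab) hb' ?_ ?_ ?_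
  · simpa using this
  · intro τ hτ
    rw [ascentField_neg_fun, descentField_eq_neg]
    exact (ha _ (hrev τ hτ)).comp_const_sub (s - t) τ
  · intro τ hτ
    refine hreg' _ ?_
    rw [hlb τ hτ]
    exact ⟨by linarith [hτ.1], by linarith [hτ.2]⟩
  · intro τ hτ
    refine hreg' _ ?_
    rw [hl _ (hrev τ hτ)]
    exact ⟨by linarith [hτ.1], by linarith [hτ.2]⟩

/-- If there are no critical points at any level in `[t, s]`, then with
`ψ(x) = ζ_x(s − t)` (ascent flow from `L_t`) and `ψ↓(z) = ζ↓_z(s − t)` (descent flow from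
`L_s`), one has `ψ(x) ∈ L_s`, `ψ↓(z) ∈ L_t`, and the descent flow inverts the ascent flow:
`ψ↓(ψ(x)) = x` on `L_t` and `ψ(ψ↓(z)) = z` on `L_s`. -/
theorem descent_inverts_ascent {d : ℕ} (f : EuclideanSpace ℝ (Fin d) → ℝ)
    (hf : ContDiff ℝ 2 f) (hf_nonneg : ∀ x, 0 ≤ f x) (hf_int : ∫ x, f x = 1)
    (t s : ℝ) (ht : 0 < t) (hts : t < s) (hs_max : ∃ z, s < f z)
    (hreg : ∀ y, f y ∈ Icc t s → gradient f y ≠ 0)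
    (ζ : EuclideanSpace ℝ (Fin d) → ℝ → EuclideanSpace ℝ (Fin d))
    (hζ0 : ∀ x, f x = t → ζ x 0 = x)
    (hζ : ∀ x, f x = t → ∀ τ ∈ Icc (0 : ℝ) (s - t),
      HasDerivAt (ζ x) (ascentField f (ζ x τ)) τ)
    (ζd : EuclideanSpace ℝ (Fin d) → ℝ → EuclideanSpace ℝ (Fin d))
    (hζd0 : ∀ z, f z = s → ζd z 0 = z)
    (hζd : ∀ z, f z = s → ∀ τ ∈ Icc (0 : ℝ) (s - t),
      HasDerivAt (ζd z) (descentField f (ζd z τ)) τ) :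
    (∀ x, f x = t → f (ζ x (s - t)) = s) ∧
    (∀ z, f z = s → f (ζd z (s - t)) = t) ∧
    (∀ x, f x = t → ζd (ζ x (s - t)) (s - t) = x) ∧
    (∀ z, f z = s → ζ (ζd z (s - t)) (s - t) = z) := by
  have hT : s - t ∈ Icc (0 : ℝ) (s - t) := ⟨by linarith, le_rfl⟩
  have e : -t - -s = s - t := by ring
  have hreg' : ∀ y, -f y ∈ Icc (-s) (-t) → gradient (fun x => -f x) y ≠ 0 := by
    intro y hy
    rw [gradient_neg_fun]
    exact neg_ne_zero.2 (hreg y ⟨by linarith [hy.2], by linarith [hy.1]⟩)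
  have hζd' : ∀ z, f z = s → ∀ τ ∈ Icc (0 : ℝ) (-t - -s),
      HasDerivAt (ζd z) (ascentField (fun x => -f x) (ζd z τ)) τ := by
    intro z hz τ hτ
    rw [ascentField_neg_fun]
    exact hζd z hz τ (e ▸ hτ)
  have A : ∀ x, f x = t → f (ζ x (s - t)) = s := by
    intro x hx
    rw [level_ascent f hf t s hreg (ζ x) (by rw [hζ0 x hx, hx]) (hζ x hx) _ hT]
    ring
  have B : ∀ z, f z = s → f (ζd z (s - t)) = t := by
    intro z hz
    have := level_ascent (fun x => -f x) hf.neg (-s) (-t) hreg' (ζd z)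
      (by simp only [hζd0 z hz, hz]) (hζd' z hz) (s - t) (by rw [e]; exact hT)
    linarith
  refine ⟨A, B, ?_, ?_⟩
  · intro x hx
    have := inverts_aux f hf t s hts hreg (ζ x) (ζd (ζ x (s - t))) (by rw [hζ0 x hx, hx])
      (hζd0 _ (A x hx)) (hζ x hx) (hζd _ (A x hx))
    rw [this, hζ0 x hx]
  · intro z hz
    have := inverts_aux (fun x => -f x) hf.neg (-s) (-t) (by linarith) hreg' (ζd z)
      (ζ (ζd z (s - t))) (by simp only [hζd0 z hz, hz]) (by rw [e]; exact hζ0 _ (B z hz))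
      (hζd' z hz) ?_
    · rw [e] at this
      rw [this, hζd0 z hz]
    · intro τ hτ
      rw [descentField_eq_neg, ascentField_neg_fun, descentField_eq_neg, neg_neg]
      exact hζ _ (B z hz) τ (e ▸ hτ)
end

section
/- Suppose t ∈ (0, max f), L_t is nonempty and compact, and ∇f ≠ 0 on L_t. For sufficiently small η > 0 there exist β ∈ (0, η) and c₀ > 0 such that on the open set G := {x : t + η − β < f(x) < t + η + β} one has ‖∇f‖ > c₀, and the descent time τ(x) := inf{s > 0 : f(x − s N(x)) = t}, with N(x) := ∇f(x)/‖∇f(x)‖, is well-defined and satisfies 0 < τ(x) < 4η/c₀ for all x ∈ G. -/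
open Metric Set Filter Topology MeasureTheory

/-- The descent time `τ(x) = inf{s > 0 : f(x − s N(x)) = t}` along the unit normal
direction `N(x) = ∇f(x)/‖∇f(x)‖`. -/
noncomputable def descTime {d : ℕ} (f : EuclideanSpace ℝ (Fin d) → ℝ) (t : ℝ)
    (x : EuclideanSpace ℝ (Fin d)) : ℝ :=
  sInf {s : ℝ | 0 < s ∧ f (x - s • (‖gradient f x‖⁻¹ • gradient f x)) = t}

/-- The superlevel set is compact. -/
lemma superlevel_compact {d : ℕ} (f : EuclideanSpace ℝ (Fin d) → ℝ)
    (hf : Continuous f) (hf_int : ∫ x, f x = 1)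
    (t : ℝ) (ht : 0 < t)
    (hcomp : IsCompact {x : EuclideanSpace ℝ (Fin d) | f x = t}) :
    IsCompact {x : EuclideanSpace ℝ (Fin d) | t ≤ f x} := by
  have hI : Integrable f := by
    by_contra h
    rw [integral_undef h] at hf_int
    norm_num at hf_int
  obtain ⟨R₀, hR₀⟩ := hcomp.isBounded.subset_closedBall 0
  set R := max R₀ 0 with hR
  have hLR : ∀ x, f x = t → ‖x‖ ≤ R := fun x hx => by
    have := hR₀ hx
    rw [mem_closedBall_zero_iff] at this
    exact this.trans (le_max_left _ _)
  have hR0 : 0 ≤ R := le_max_right _ _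
  refine (isCompact_closedBall (0 : EuclideanSpace ℝ (Fin d)) R).of_isClosed_subset
    (isClosed_le continuous_const hf) ?_
  intro x hx
  rw [mem_closedBall_zero_iff]
  by_contra hxR
  push Not at hxR
  have hxt : t < f x := lt_of_le_of_ne hx (fun h => absurd (hLR x h.symm) (not_le.2 hxR))
  have hopen : IsOpen {y : EuclideanSpace ℝ (Fin d) | t < f y ∧ R < ‖y‖} :=
    (isOpen_lt continuous_const hf).inter (isOpen_lt continuous_const continuous_norm)
  obtain ⟨ε, hε, hball⟩ := Metric.isOpen_iff.1 hopen x ⟨hxt, hxR⟩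
  -- on rays through the ball, f stays above t
  have hray : ∀ y ∈ ball x ε, ∀ s : ℝ, 1 ≤ s → t < f (s • y) := by
    intro y hy s hs
    obtain ⟨h1, h2⟩ := hball hy
    by_contra hcon
    push Not at hcon
    have hc : ContinuousOn (fun r : ℝ => f (r • y)) (Icc 1 s) := by fun_prop
    have := intermediate_value_Icc' hs hc
    obtain ⟨r, hr, hrt⟩ := this ⟨hcon, by simpa using h1.le⟩
    have h3 := hLR _ hrt
    rw [norm_smul, Real.norm_of_nonneg (by linarith [hr.1])] at h3
    nlinarith [hr.1]
  have hsub : ∀ s : ℝ, 1 ≤ s → ball (s • x) (s * ε) ⊆ {y | t ≤ f y} := by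
    intro s hs y hy
    have hs0 : 0 < s := by linarith
    have hy' : s⁻¹ • y ∈ ball x ε := by
      rw [mem_ball, dist_eq_norm] at hy ⊢
      have : s⁻¹ • y - x = s⁻¹ • (y - s • x) := by
        rw [smul_sub, smul_smul, inv_mul_cancel₀ hs0.ne', one_smul]
      rw [this, norm_smul, norm_inv, Real.norm_of_nonneg hs0.le, inv_mul_lt_iff₀ hs0]
      exact hy
    have := hray _ hy' s hs
    rw [smul_smul, mul_inv_cancel₀ hs0.ne', one_smul] at this
    exact this.le
  have hfin : volume {y : EuclideanSpace ℝ (Fin d) | t ≤ f y} < ⊤ := hI.measure_ge_lt_top ht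
  have hd : d ≠ 0 := by
    rintro rfl
    have : x = 0 := Subsingleton.elim _ _
    rw [this, norm_zero] at hxR
    linarith
  set B := volume.real (ball (0 : EuclideanSpace ℝ (Fin d)) 1) with hB
  have hBpos : 0 < B := by
    rw [hB, Measure.real]
    exact ENNReal.toReal_pos (measure_ball_pos _ _ one_pos).ne' measure_ball_lt_top.ne
  set M := volume.real {y : EuclideanSpace ℝ (Fin d) | t ≤ f y} with hM
  have hbd : ∀ s : ℝ, 1 ≤ s → s * (ε ^ d * B) ≤ M := by
    intro s hs
    have h1 : volume.real (ball (s • x) (s * ε)) ≤ M := measureReal_mono (hsub s hs) hfin.ne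
    rw [Measure.real, Measure.addHaar_ball_of_pos _ _ (by positivity), ENNReal.toReal_mul,
      ENNReal.toReal_ofReal (by positivity), finrank_euclideanSpace_fin] at h1
    change (s * ε) ^ d * B ≤ M at h1
    rw [mul_pow] at h1
    have h2 : s ≤ s ^ d := le_self_pow₀ hs hd
    have h3 : 0 < ε ^ d * B := by positivity
    nlinarith
  have hp : 0 < ε ^ d * B := by positivity
  have h1 := hbd (max 1 (M / (ε ^ d * B) + 1)) (le_max_left _ _)
  have h2 : (M / (ε ^ d * B) + 1) * (ε ^ d * B) ≤ M :=
    le_trans (mul_le_mul_of_nonneg_right (le_max_right _ _) hp.le) h1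
  rw [add_mul, div_mul_cancel₀ _ hp.ne'] at h2
  linarith

/-- If `L_t` is nonempty, compact, and free of critical points, then for all
sufficiently small `η > 0` there are `β ∈ (0, η)` and `c₀ > 0` such that, on the band
`G = {x : t + η − β < f x < t + η + β}`, one has `‖∇f‖ > c₀` and the descent time
`τ(x) = inf{s > 0 : f(x − s N(x)) = t}` is well-defined (the set is nonempty and the
infimum is attained) with `0 < τ(x) < 4η/c₀`. -/
theorem descent_time_bounded {d : ℕ} (f : EuclideanSpace ℝ (Fin d) → ℝ)
    (hf : ContDiff ℝ 2 f) (hf_nonneg : ∀ x, 0 ≤ f x) (hf_int : ∫ x, f x = 1)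
    (t : ℝ) (ht : 0 < t) (ht_max : ∃ z, t < f z)
    (hne : {x : EuclideanSpace ℝ (Fin d) | f x = t}.Nonempty)
    (hcomp : IsCompact {x : EuclideanSpace ℝ (Fin d) | f x = t})
    (hreg : ∀ x, f x = t → gradient f x ≠ 0) :
    ∃ η₀ > 0, ∀ η : ℝ, 0 < η → η < η₀ →
      ∃ β c₀ : ℝ, 0 < β ∧ β < η ∧ 0 < c₀ ∧
        (∀ x : EuclideanSpace ℝ (Fin d),
          t + η - β < f x → f x < t + η + β → c₀ < ‖gradient f x‖) ∧
        (∀ x : EuclideanSpace ℝ (Fin d), t + η - β < f x → f x < t + η + β →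
          (∃ s : ℝ, 0 < s ∧ f (x - s • (‖gradient f x‖⁻¹ • gradient f x)) = t) ∧
          0 < descTime f t x ∧ descTime f t x < 4 * η / c₀ ∧
          f (x - descTime f t x • (‖gradient f x‖⁻¹ • gradient f x)) = t) := by
  have hfc : Continuous f := hf.continuous
  have hK := superlevel_compact f hfc hf_int t ht hcomp
  have hfd : Continuous (fderiv ℝ f) := hf.continuous_fderiv (by norm_num)
  have hng : ∀ x, ‖gradient f x‖ = ‖fderiv ℝ f x‖ := fun x => by simp [gradient]
  have hgc : Continuous fun x => ‖gradient f x‖ := by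
    simp only [hng]; exact hfd.norm
  obtain ⟨x₀, hx₀, hmin⟩ := hcomp.exists_isMinOn hne hgc.continuousOn
  set m := ‖gradient f x₀‖ with hm
  have hmpos : 0 < m := norm_pos_iff.2 (hreg x₀ hx₀)
  set c := m / 2 with hc
  have hcpos : 0 < c := by positivity
  -- gradient bound near the level set
  have hη₁ : ∃ η₁ > 0, ∀ x, t ≤ f x → f x < t + η₁ → c < ‖gradient f x‖ := by
    have hQ : IsCompact ({x | t ≤ f x} ∩ {x | ‖gradient f x‖ ≤ c}) :=
      hK.inter_right (isClosed_le hgc continuous_const)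
    rcases ({x | t ≤ f x} ∩ {x | ‖gradient f x‖ ≤ c}).eq_empty_or_nonempty with he | hn
    · refine ⟨1, one_pos, fun x hx _ => ?_⟩
      by_contra hcon
      have : x ∈ ({x | t ≤ f x} ∩ {x | ‖gradient f x‖ ≤ c}) := ⟨hx, not_lt.1 hcon⟩
      rw [he] at this
      exact this
    · obtain ⟨y, hy, hymin⟩ := hQ.exists_isMinOn hn hfc.continuousOn
      have hyt : t < f y := by
        refine lt_of_le_of_ne hy.1 fun h => ?_
        have h1 : m ≤ ‖gradient f y‖ := hmin (show f y = t from h.symm)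
        have h2 : ‖gradient f y‖ ≤ c := hy.2
        linarith
      refine ⟨f y - t, by linarith, fun x hx hx2 => ?_⟩
      by_contra hcon
      have h1 : f y ≤ f x := hymin (show x ∈ _ from ⟨hx, not_lt.1 hcon⟩)
      linarith
  obtain ⟨η₁, hη₁pos, hη₁⟩ := hη₁
  -- uniform continuity of the derivative
  have hδ : ∃ δ > 0, ∀ x, t ≤ f x → ∀ y, dist x y < δ →
      ‖fderiv ℝ f y - fderiv ℝ f x‖ ≤ c / 2 := by
    have hu := hK.uniformContinuousAt_of_continuousAt (fderiv ℝ f)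
      (fun x _ => hfd.continuousAt) (Metric.dist_mem_uniformity (half_pos hcpos))
    obtain ⟨δ, hδ, h⟩ := Metric.mem_uniformity_dist.1 hu
    refine ⟨δ, hδ, fun x hx y hxy => ?_⟩
    have h1 : dist (fderiv ℝ f x) (fderiv ℝ f y) < c / 2 := h hxy hx
    rw [← dist_eq_norm, dist_comm]
    exact h1.le
  obtain ⟨δ, hδpos, hδ⟩ := hδ
  refine ⟨min (η₁ / 2) (c * δ / 4), by positivity, fun η hη hηlt => ?_⟩
  have hlt1 : η < η₁ / 2 := hηlt.trans_le (min_le_left _ _)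
  have hlt2 : η < c * δ / 4 := hηlt.trans_le (min_le_right _ _)
  refine ⟨η / 2, c, by positivity, by linarith, hcpos,
    fun x h1 h2 => hη₁ x (by linarith) (by linarith), fun x h1 h2 => ?_⟩
  have hxg : c < ‖gradient f x‖ := hη₁ x (by linarith) (by linarith)
  have hgpos : 0 < ‖gradient f x‖ := hcpos.trans hxg
  set N := ‖gradient f x‖⁻¹ • gradient f x with hN
  have hNnorm : ‖N‖ = 1 := by
    rw [hN, norm_smul, norm_inv, norm_norm, inv_mul_cancel₀ hgpos.ne']
  have hDN : fderiv ℝ f x N = ‖gradient f x‖ := by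
    have : fderiv ℝ f x (gradient f x) = ‖gradient f x‖ ^ 2 := by
      rw [← real_inner_self_eq_norm_sq]
      conv_rhs => rw [gradient]
      rw [InnerProductSpace.toDual_symm_apply]
      rfl
    rw [hN, map_smul, this, smul_eq_mul]
    field_simp
  set S := 4 * η / c with hS
  have hSpos : 0 < S := by positivity
  have hSδ : S < δ := by
    rw [hS, div_lt_iff₀ hcpos]; linarith
  have hfS : f (x - S • N) < t := by
    have hmem : x - S • N ∈ ball x δ := by
      rw [mem_ball, dist_eq_norm, sub_sub_cancel_left, norm_neg, norm_smul, hNnorm,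
        Real.norm_of_nonneg hSpos.le, mul_one]
      exact hSδ
    have hmv := (convex_ball x δ).norm_image_sub_le_of_norm_hasFDerivWithin_le'
      (f := f) (f' := fderiv ℝ f) (φ := fderiv ℝ f x) (C := c / 2)
      (fun y _ => (hf.differentiable (by norm_num) y).hasFDerivAt.hasFDerivWithinAt)
      (fun y hy => hδ x (by linarith) y (by rw [dist_comm]; exact hy))
      (mem_ball_self hδpos) hmem
    rw [sub_sub_cancel_left, norm_neg, norm_smul, hNnorm, Real.norm_of_nonneg hSpos.le,
      map_neg, map_smul, hDN, Real.norm_eq_abs, smul_eq_mul] at hmv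
    have h3 := (abs_le.1 hmv).2
    have h4 : S * c = 4 * η := by rw [hS]; field_simp
    nlinarith
  have hcont : Continuous fun s : ℝ => f (x - s • N) := by fun_prop
  obtain ⟨s, hs, hst⟩ := intermediate_value_Icc' hSpos.le hcont.continuousOn
    (show t ∈ Icc (f (x - S • N)) (f (x - (0 : ℝ) • N)) from
      ⟨hfS.le, by rw [zero_smul, sub_zero]; linarith⟩)
  have hst : f (x - s • N) = t := hst
  have hs0 : 0 < s := by
    refine lt_of_le_of_ne hs.1 fun h => ?_
    rw [← h, zero_smul, sub_zero] at hst
    linarith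
  have hsS : s < S := by
    refine lt_of_le_of_ne hs.2 fun h => ?_
    rw [h] at hst
    linarith
  have hset : {s : ℝ | 0 < s ∧ f (x - s • N) = t} = Ici 0 ∩ {s | f (x - s • N) = t} := by
    ext r
    refine ⟨fun h => ⟨h.1.le, h.2⟩, fun h => ⟨lt_of_le_of_ne h.1 fun h0 => ?_, h.2⟩⟩
    have h5 : f (x - r • N) = t := h.2
    rw [← h0, zero_smul, sub_zero] at h5
    linarith
  have hclosed : IsClosed {s : ℝ | 0 < s ∧ f (x - s • N) = t} := by
    rw [hset]
    exact isClosed_Ici.inter (isClosed_eq hcont continuous_const)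
  have hbdd : BddBelow {s : ℝ | 0 < s ∧ f (x - s • N) = t} := ⟨0, fun r hr => hr.1.le⟩
  have hmemI : descTime f t x ∈ {s : ℝ | 0 < s ∧ f (x - s • N) = t} :=
    hclosed.csInf_mem ⟨s, hs0, hst⟩ hbdd
  have hle : descTime f t x ≤ s := csInf_le hbdd ⟨hs0, hst⟩
  exact ⟨⟨s, hs0, hst⟩, hmemI.1, hle.trans_lt hsS, hmemI.2⟩
end
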